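/- arXiv:1208.1413 — 14 statements merged into one kernel-verified Lean document; each statement's English description precedes it below -/
import Mathlib

section
/- Let γ ∈ ℝ with |γ| > 1 and let B ⊂ ℝ be a finite set. Suppose (c_i)_{i≥1} is an optimal (γ,B)-representation of a number x ∈ J_{γ,B}. Then for every n ≥ 0, writing x_n = Σ_{i=1}^∞ c_{n+i}/γ^i for the n-th tail (so x_0 = x), the digit c_{n+1} satisfies: (i) γ·x_n − c_{n+1} ∈ J_{γ,B}, and (ii) |γ·x_n − c_{n+1}| ≤ |γ·x_n − b| for every b ∈ B such that γ·x_n − b ∈ J_{γ,B}. -/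
/-- A `(γ, B)`-representation of `x`: a sequence of digits `b i ∈ B` (here `b i` is the
digit `b_{i+1}` of the paper, i.e. sequences are 0-indexed) with `x = ∑_{i ≥ 1} b_i / γ^i`. -/
def IsRep (γ : ℝ) (B : Set ℝ) (b : ℕ → ℝ) (x : ℝ) : Prop :=
  (∀ i, b i ∈ B) ∧ HasSum (fun i : ℕ => b i / γ ^ (i + 1)) x

/-- `J_{γ,B}`: the set of real numbers admitting a `(γ,B)`-representation. -/
def RepSet (γ : ℝ) (B : Set ℝ) : Set ℝ := {x | ∃ b, IsRep γ B b x}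

/-- A `(γ,B)`-representation `c` of `x` is optimal if its partial sums approximate `x`
at least as well as those of any other `(γ,B)`-representation of `x`. -/
def IsOptimalRep (γ : ℝ) (B : Set ℝ) (c : ℕ → ℝ) (x : ℝ) : Prop :=
  IsRep γ B c x ∧ ∀ b : ℕ → ℝ, IsRep γ B b x → ∀ n : ℕ, 1 ≤ n →
    |x - ∑ i ∈ Finset.range n, c i / γ ^ (i + 1)| ≤
      |x - ∑ i ∈ Finset.range n, b i / γ ^ (i + 1)|

/-- The digit alphabet `{0, 1, …, M}` as a set of reals. -/
def digitSet (M : ℤ) : Set ℝ := (fun k : ℤ => (k : ℝ)) '' Set.Icc 0 M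

/-- The tail of a convergent expansion, rescaled. -/
theorem tail_hasSum (γ : ℝ) (h0 : γ ≠ 0) (c : ℕ → ℝ) (x : ℝ)
    (h : HasSum (fun i : ℕ => c i / γ ^ (i + 1)) x) (n : ℕ) :
    HasSum (fun i : ℕ => c (n + i) / γ ^ (i + 1))
      (γ ^ n * (x - ∑ i ∈ Finset.range n, c i / γ ^ (i + 1))) := by
  have h1 := ((hasSum_nat_add_iff' n).2 h).mul_left (γ ^ n)
  refine Eq.mp (congrArg (fun f => HasSum f _) (funext ?_)) h1
  intro i
  symm
  rw [Nat.add_comm n i, show i + n + 1 = n + (i + 1) by omega, pow_add γ n]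
  field_simp

/-- if `(c_i)` is an optimal `(γ,B)`-representation of `x`, then for every `n ≥ 0`
the tail `x_n = ∑_{i ≥ 1} c_{n+i}/γ^i` satisfies: (i) `γ·x_n − c_{n+1} ∈ J_{γ,B}` and
(ii) `|γ·x_n − c_{n+1}| ≤ |γ·x_n − b|` for every `b ∈ B` with `γ·x_n − b ∈ J_{γ,B}`.
(In the 0-indexed setting, `c n` is the digit `c_{n+1}`.) -/
theorem optimal_digits_satisfy_optimal_transformation
    (γ : ℝ) (hγ : 1 < |γ|) (B : Set ℝ) (hB : B.Finite)
    (c : ℕ → ℝ) (x : ℝ) (hc : IsOptimalRep γ B c x) (n : ℕ) :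
    (γ * (∑' i : ℕ, c (n + i) / γ ^ (i + 1)) - c n ∈ RepSet γ B) ∧
    (∀ b ∈ B, γ * (∑' i : ℕ, c (n + i) / γ ^ (i + 1)) - b ∈ RepSet γ B →
      |γ * (∑' i : ℕ, c (n + i) / γ ^ (i + 1)) - c n| ≤
        |γ * (∑' i : ℕ, c (n + i) / γ ^ (i + 1)) - b|) := by
  have h0 : γ ≠ 0 := by
    rintro rfl
    norm_num at hγ
  obtain ⟨⟨hcB, hcs⟩, hopt⟩ := hc
  have hn := tail_hasSum γ h0 c x hcs n
  have hn1 := tail_hasSum γ h0 c x hcs (n + 1)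
  rw [hn.tsum_eq]
  set s := ∑ i ∈ Finset.range n, c i / γ ^ (i + 1) with hs
  have hp : γ ^ (n + 1) ≠ 0 := pow_ne_zero _ h0
  have key : ∀ b : ℝ, γ * (γ ^ n * (x - s)) - b = γ ^ (n + 1) * (x - (s + b / γ ^ (n + 1))) := by
    intro b
    field_simp
    ring
  rw [Finset.sum_range_succ, ← hs, ← key] at hn1
  refine ⟨⟨fun i => c (n + 1 + i), fun i => hcB _, hn1⟩, ?_⟩
  rintro b hb ⟨d, hdB, hds⟩
  let e : ℕ → ℝ := fun i => if i < n then c i else if i = n then b else d (i - (n + 1))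
  have hsum : ∑ i ∈ Finset.range (n + 1), e i / γ ^ (i + 1) = s + b / γ ^ (n + 1) := by
    rw [Finset.sum_range_succ]
    congr 1
    · apply Finset.sum_congr rfl
      intro i hi
      simp [e, Finset.mem_range.1 hi]
    · simp [e]
  have he : IsRep γ B e x := by
    constructor
    · intro i
      simp only [e]
      split_ifs
      exacts [hcB i, hb, hdB _]
    · rw [← hasSum_nat_add_iff' (n + 1), hsum]
      have h2 := hds.div_const (γ ^ (n + 1))
      rw [key, mul_div_cancel_left₀ _ hp] at h2
      refine Eq.mp (congrArg (fun f => HasSum f _) (funext ?_)) h2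
      intro i
      symm
      have h3 : e (i + (n + 1)) = d i := by
        simp only [e]
        rw [if_neg (by omega), if_neg (by omega), Nat.add_sub_cancel]
      rw [h3, div_div, ← pow_add]
      congr 2
      omega
  have h4 := hopt e he (n + 1) (by omega)
  rw [hsum, Finset.sum_range_succ, ← hs] at h4
  rw [key, key, abs_mul, abs_mul]
  exact mul_le_mul_of_nonneg_left h4 (abs_nonneg _)
end

section
/- Let β > 1 with β ∉ ℤ and let B = {0,1,…,⌈β⌉−1}. Then for every x ∈ [0,1), the digit ⌊βx⌋ is the unique element b ∈ B such that βx − b ∈ J_{β,B} and |βx − b| ≤ |βx − b′| for every b′ ∈ B with βx − b′ ∈ J_{β,B}. In other words, on [0,1) the optimal transformation coincides with the Rényi greedy transformation T(x) = βx − ⌊βx⌋. -/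
theorem floor_mem_digitSet (β : ℝ) (hβ : 1 < β) (y : ℝ) (hy : y ∈ Set.Ico (0 : ℝ) 1) :
    ((⌊β * y⌋ : ℤ) : ℝ) ∈ digitSet (⌈β⌉ - 1) := by
  obtain ⟨h0, h1⟩ := hy
  refine ⟨⌊β * y⌋, ⟨Int.floor_nonneg.2 (by positivity), ?_⟩, rfl⟩
  have : ⌊β * y⌋ < ⌈β⌉ := by
    rw [Int.floor_lt]
    have := Int.le_ceil β
    nlinarith
  omega

theorem digitSet_nonneg (M : ℤ) (b : ℝ) (hb : b ∈ digitSet M) : 0 ≤ b := by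
  obtain ⟨k, hk, rfl⟩ := hb
  exact Int.cast_nonneg hk.1

theorem mem_repSet (β : ℝ) (hβ : 1 < β) (y : ℝ) (hy : y ∈ Set.Ico (0 : ℝ) 1) :
    y ∈ RepSet β (digitSet (⌈β⌉ - 1)) := by
  have hT : ∀ n : ℕ, (fun z : ℝ => Int.fract (β * z))^[n] y ∈ Set.Ico (0 : ℝ) 1 := by
    intro n
    cases n with
    | zero => exact hy
    | succ n =>
      rw [Function.iterate_succ_apply']
      exact ⟨Int.fract_nonneg _, Int.fract_lt_one _⟩
  have hd := fun i => floor_mem_digitSet β hβ _ (hT i)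
  refine ⟨fun i => ((⌊β * ((fun z : ℝ => Int.fract (β * z))^[i] y)⌋ : ℤ) : ℝ), hd, ?_⟩
  have hpos : (0 : ℝ) < β := by linarith
  have hsum : ∀ n : ℕ, ∑ i ∈ Finset.range n,
      ((⌊β * ((fun z : ℝ => Int.fract (β * z))^[i] y)⌋ : ℤ) : ℝ) / β ^ (i + 1)
      = y - ((fun z : ℝ => Int.fract (β * z))^[n] y) * (β⁻¹) ^ n := by
    intro n
    induction n with
    | zero => simp
    | succ n ih =>
      rw [Finset.sum_range_succ, ih, Function.iterate_succ_apply']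
      simp only [Int.fract, inv_pow]
      field_simp
      ring
  rw [hasSum_iff_tendsto_nat_of_nonneg
    (fun i => div_nonneg (digitSet_nonneg _ _ (hd i)) (by positivity))]
  simp only [hsum]
  have hz : Filter.Tendsto (fun n : ℕ => ((fun z : ℝ => Int.fract (β * z))^[n] y) * (β⁻¹) ^ n)
      Filter.atTop (nhds 0) := by
    refine squeeze_zero (fun n => mul_nonneg (hT n).1 (by positivity))
      (fun n => ?_) (tendsto_pow_atTop_nhds_zero_of_lt_one (r := β⁻¹) (by positivity)
        (inv_lt_one_of_one_lt₀ hβ))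
    exact mul_le_of_le_one_left (by positivity) (hT n).2.le
  simpa using tendsto_const_nhds.sub hz

theorem repSet_nonneg (β : ℝ) (hβ : 1 < β) (M : ℤ) (y : ℝ) (hy : y ∈ RepSet β (digitSet M)) :
    0 ≤ y := by
  obtain ⟨b, hb, hs⟩ := hy
  have hpos : (0 : ℝ) < β := by linarith
  exact hs.nonneg (fun i => div_nonneg (digitSet_nonneg _ _ (hb i)) (by positivity))

/-- for `β > 1`, `β ∉ ℤ`, and `B = {0,1,…,⌈β⌉−1}`, the digit `⌊βx⌋` is,
for every `x ∈ [0,1)`, the unique `b ∈ B` with `βx − b ∈ J_{β,B}` and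
`|βx − b| ≤ |βx − b'|` for all `b' ∈ B` with `βx − b' ∈ J_{β,B}`; i.e. on `[0,1)` the
optimal transformation is the Rényi greedy transformation `T(x) = βx − ⌊βx⌋`. -/
theorem optimal_transformation_eq_greedy_positive_base
    (β : ℝ) (hβ : 1 < β) (hβZ : ∀ n : ℤ, β ≠ n) :
    ∀ x ∈ Set.Ico (0 : ℝ) 1, ∀ b : ℝ,
      (b ∈ digitSet (⌈β⌉ - 1) ∧ β * x - b ∈ RepSet β (digitSet (⌈β⌉ - 1)) ∧
        ∀ b' ∈ digitSet (⌈β⌉ - 1), β * x - b' ∈ RepSet β (digitSet (⌈β⌉ - 1)) →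
          |β * x - b| ≤ |β * x - b'|)
      ↔ b = (⌊β * x⌋ : ℝ) := by
  intro x hx b
  have hfm := floor_mem_digitSet β hβ x hx
  have hfr : β * x - (⌊β * x⌋ : ℝ) ∈ RepSet β (digitSet (⌈β⌉ - 1)) :=
    mem_repSet β hβ _ ⟨Int.fract_nonneg _, Int.fract_lt_one _⟩
  have key : ∀ b' ∈ digitSet (⌈β⌉ - 1), β * x - b' ∈ RepSet β (digitSet (⌈β⌉ - 1)) →
      b' ≤ (⌊β * x⌋ : ℝ) := by
    rintro b' ⟨k, -, rfl⟩ hr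
    have := repSet_nonneg β hβ _ _ hr
    have hk : (k : ℝ) ≤ β * x := by simpa using this
    exact Int.cast_le.2 (Int.le_floor.2 hk)
  have h0 := repSet_nonneg β hβ _ _ hfr
  constructor
  · rintro ⟨hb, hr, hmin⟩
    have h1 := hmin _ hfm hfr
    rw [abs_of_nonneg h0, abs_of_nonneg (repSet_nonneg β hβ _ _ hr)] at h1
    exact le_antisymm (key b hb hr) (by linarith)
  · rintro rfl
    refine ⟨hfm, hfr, fun b' hb' hr => ?_⟩
    rw [abs_of_nonneg h0, abs_of_nonneg (repSet_nonneg β hβ _ _ hr)]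
    linarith [key b' hb' hr]
end

section
/- Let β > 1 with β ∉ ℤ, let A = {0,1,…,⌊β⌋}, and set l = −β⌊β⌋/(β²−1), r = ⌊β⌋/(β²−1). Then J_{−β,A} = [l, r]; that is, a real number x has a (−β,A)-representation if and only if l ≤ x ≤ r. -/
lemma geo_hasSum (γ : ℝ) (h : 1 < |γ|) (c : ℝ) :
    HasSum (fun i : ℕ => c / γ ^ (i + 1)) (c / (γ - 1)) := by
  have h0 : γ ≠ 0 := by
    rintro rfl
    norm_num at h
  have h1 : γ - 1 ≠ 0 := by
    intro h1
    have : γ = 1 := by linarith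
    rw [this] at h
    norm_num at h
  have hlt : |γ⁻¹| < 1 := by
    rw [abs_inv]
    exact inv_lt_one_of_one_lt₀ h
  have := (hasSum_geometric_of_abs_lt_one hlt).mul_left (c / γ)
  have e1 : (fun i : ℕ => c / γ ^ (i + 1)) = fun i : ℕ => c / γ * γ⁻¹ ^ i := by
    funext i
    rw [pow_succ, inv_pow]
    field_simp
  have e2 : c / (γ - 1) = c / γ * (1 - γ⁻¹)⁻¹ := by
    rw [show 1 - γ⁻¹ = (γ - 1) / γ by field_simp, inv_div]
    field_simp
  rw [e1, e2]
  exact this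

lemma digit_exists (M : ℤ) (hM : 0 ≤ M) (l r y : ℝ) (hlr : 1 ≤ r - l)
    (h1 : l ≤ y) (h2 : y ≤ M + r) :
    ∃ d : ℤ, 0 ≤ d ∧ d ≤ M ∧ l ≤ y - d ∧ y - d ≤ r := by
  by_cases hy : y ≤ r
  · exact ⟨0, le_rfl, hM, by simpa using h1, by simpa using hy⟩
  · push Not at hy
    refine ⟨⌈y - r⌉, Int.ceil_nonneg (by linarith), Int.ceil_le.2 (by linarith), ?_, ?_⟩
    · have := Int.ceil_lt_add_one (y - r)
      linarith
    · have := Int.le_ceil (y - r)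
      linarith

/-- for `β > 1`, `β ∉ ℤ`, and `A = {0,1,…,⌊β⌋}`, the set of numbers with a
`(−β,A)`-representation is exactly the interval `[−β⌊β⌋/(β²−1), ⌊β⌋/(β²−1)]`. -/
theorem repSet_neg_base_eq_Icc
    (β : ℝ) (hβ : 1 < β) (hβZ : ∀ n : ℤ, β ≠ n) :
    RepSet (-β) (digitSet ⌊β⌋) =
      Set.Icc (-β * ⌊β⌋ / (β ^ 2 - 1)) ((⌊β⌋ : ℝ) / (β ^ 2 - 1)) := by
  have hM1 : (1 : ℤ) ≤ ⌊β⌋ := Int.le_floor.2 (by simpa using hβ.le)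
  have hMlt : β < ⌊β⌋ + 1 := Int.lt_floor_add_one β
  generalize ⌊β⌋ = M at *
  have hM1r : (1 : ℝ) ≤ M := by exact_mod_cast hM1
  have hb1 : (0 : ℝ) < β - 1 := by linarith
  have hb2 : (0 : ℝ) < β + 1 := by linarith
  have hsq : β ^ 2 - 1 = (β - 1) * (β + 1) := by ring
  have hnb : -β - 1 ≠ 0 := by linarith
  have habsn : 1 < |-β| := by rw [abs_neg, abs_of_pos (by linarith)]; exact hβ
  have habsp : 1 < |β| := by rw [abs_of_pos (by linarith)]; exact hβ
  have hdig : ∀ a ∈ digitSet M, 0 ≤ a ∧ a ≤ M := by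
    rintro a ⟨k, hk, rfl⟩
    exact ⟨Int.cast_nonneg hk.1, Int.cast_le.2 hk.2⟩
  ext x
  constructor
  · rintro ⟨b, hb, hs⟩
    have h1 := hs.sub (geo_hasSum (-β) habsn ((M : ℝ) / 2))
    have h2 := geo_hasSum β habsp ((M : ℝ) / 2)
    have hbd : ∀ i : ℕ, |b i / (-β) ^ (i + 1) - (M : ℝ) / 2 / (-β) ^ (i + 1)|
        ≤ (M : ℝ) / 2 / β ^ (i + 1) := by
      intro i
      rw [← sub_div, abs_div, abs_pow, abs_neg, abs_of_pos (show 0 < β by linarith)]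
      have := hdig _ (hb i)
      gcongr
      rw [abs_le]
      constructor <;> linarith
    have hup := hasSum_le (fun i => (abs_le.1 (hbd i)).2) h1 h2
    have hlo := hasSum_le (fun i => (abs_le.1 (hbd i)).1) h2.neg h1
    have e1 : (M : ℝ) / (β ^ 2 - 1) = M / 2 / (β - 1) + M / 2 / (-β - 1) := by
      rw [hsq, show -β - 1 = -(β + 1) by ring]
      field_simp
      ring
    have e2 : -β * (M : ℝ) / (β ^ 2 - 1) = -(M / 2 / (β - 1)) + M / 2 / (-β - 1) := by
      rw [hsq, show -β - 1 = -(β + 1) by ring]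
      field_simp
      ring
    rw [Set.mem_Icc, e1, e2]
    constructor <;> linarith
  · intro hx
    set l : ℝ := -β * M / (β ^ 2 - 1) with hl
    set r : ℝ := (M : ℝ) / (β ^ 2 - 1) with hr
    have hr' : -β * r = l := by rw [hl, hr]; ring
    have hl' : -β * l = M + r := by
      rw [hl, hr, hsq]; field_simp; ring
    have hlr : 1 ≤ r - l := by
      have : r - l = M / (β - 1) := by rw [hl, hr, hsq]; field_simp; ring
      rw [this, le_div_iff₀ hb1]
      linarith
    have hstep : ∀ z : Set.Icc l r, ∃ d : ℤ, 0 ≤ d ∧ d ≤ M ∧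
        l ≤ -β * z - d ∧ -β * z - d ≤ r := by
      rintro ⟨z, hz1, hz2⟩
      apply digit_exists M (by omega) l r _ hlr
      · show l ≤ -β * z
        nlinarith
      · show -β * z ≤ M + r
        nlinarith
    choose d hd0 hdM hdl hdr using hstep
    let T : Set.Icc l r → Set.Icc l r := fun z => ⟨-β * z - d z, hdl z, hdr z⟩
    let s : ℕ → Set.Icc l r := fun n => T^[n] ⟨x, hx⟩
    have hs : ∀ n, (s (n + 1) : ℝ) = -β * s n - d (s n) := by
      intro n
      simp only [s, Function.iterate_succ_apply', T]
    have hmem : ∀ i, ((d (s i) : ℤ) : ℝ) ∈ digitSet M :=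
      fun i => ⟨d (s i), ⟨hd0 _, hdM _⟩, rfl⟩
    have hβ0 : -β ≠ 0 := by linarith
    have hpart : ∀ n, ∑ i ∈ Finset.range n, ((d (s i) : ℤ) : ℝ) / (-β) ^ (i + 1)
        = x - s n / (-β) ^ n := by
      intro n
      induction n with
      | zero => simp [s]
      | succ n ih =>
        rw [Finset.sum_range_succ, ih, hs, pow_succ]
        have : (-β) ^ n ≠ 0 := pow_ne_zero _ hβ0
        generalize (-β) ^ n = p at *
        have hb0 : β ≠ 0 := by linarith
        field_simp
        ring
    have hsum : Summable (fun i : ℕ => ((d (s i) : ℤ) : ℝ) / (-β) ^ (i + 1)) := by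
      refine Summable.of_norm_bounded (geo_hasSum β habsp (M : ℝ)).summable ?_
      intro i
      have := hdig _ (hmem i)
      rw [Real.norm_eq_abs, abs_div, abs_pow, abs_neg, abs_of_pos (show 0 < β by linarith),
        abs_of_nonneg this.1]
      gcongr
      exact hdM _
    refine ⟨fun i => (d (s i) : ℝ), hmem, ?_⟩
    rw [hsum.hasSum_iff_tendsto_nat]
    simp only [hpart]
    have hz : Filter.Tendsto (fun n => (s n : ℝ) / (-β) ^ n) Filter.atTop (nhds 0) := by
      have hg : Filter.Tendsto (fun n : ℕ => (|l| + |r|) * (β⁻¹) ^ n) Filter.atTop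
          (nhds ((|l| + |r|) * 0)) :=
        (tendsto_pow_atTop_nhds_zero_of_lt_one (by positivity)
          (inv_lt_one_of_one_lt₀ hβ)).const_mul _
      rw [mul_zero] at hg
      refine squeeze_zero_norm ?_ hg
      intro n
      rw [Real.norm_eq_abs, abs_div, abs_pow, abs_neg, abs_of_pos (show 0 < β by linarith),
        inv_pow, div_eq_mul_inv]
      gcongr
      have h1 := (s n).2.1
      have h2 := (s n).2.2
      rw [abs_le]
      have := neg_abs_le l
      have := le_abs_self r
      have := abs_nonneg l
      have := abs_nonneg r
      constructor <;> linarith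
    simpa using hz.const_sub x
end

section
/- Let β > 1 with β ∉ ℤ, let A = {0,1,…,⌊β⌋}, l = −β⌊β⌋/(β²−1), r = ⌊β⌋/(β²−1), and J = [l,r]. Let a, b ∈ A with a < b, and let x ∈ J be such that −βx − a ∈ J and −βx − b ∈ J. Then b = a + 1 and −βx ∈ [l + a + 1, r + a]. -/
/-- Lemma 2 of the paper: let `β > 1`, `β ∉ ℤ`, `A = {0,…,⌊β⌋}`,
`l = −β⌊β⌋/(β²−1)`, `r = ⌊β⌋/(β²−1)`, `J = [l,r]`. If `a, b ∈ A`, `a < b`, `x ∈ J`,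
and both `−βx − a ∈ J` and `−βx − b ∈ J`, then `b = a + 1` and `−βx ∈ [l+a+1, r+a]`. -/
theorem two_admissible_digits_neg_base
    (β : ℝ) (hβ : 1 < β) (hβZ : ∀ n : ℤ, β ≠ n)
    (l r : ℝ) (hl : l = -β * ⌊β⌋ / (β ^ 2 - 1)) (hr : r = (⌊β⌋ : ℝ) / (β ^ 2 - 1))
    (a b : ℤ) (ha : 0 ≤ a) (hb : b ≤ ⌊β⌋) (hab : a < b)
    (x : ℝ) (hx : x ∈ Set.Icc l r)
    (hxa : -β * x - a ∈ Set.Icc l r) (hxb : -β * x - b ∈ Set.Icc l r) :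
    b = a + 1 ∧ -β * x ∈ Set.Icc (l + a + 1) (r + a) := by
  have h1 : (⌊β⌋ : ℝ) < β := lt_of_le_of_ne (Int.floor_le β) (fun h => hβZ _ h.symm)
  have h2 : (r - l) * (β - 1) = ⌊β⌋ := by
    have h3 : β ^ 2 - 1 ≠ 0 := by nlinarith
    rw [hl, hr]
    field_simp
    ring
  obtain ⟨a1, a2⟩ := hxa
  obtain ⟨b1, b2⟩ := hxb
  have key : b = a + 1 := by
    by_contra hne
    have h4 : a + 2 ≤ b := by omega
    have h5 : (2 : ℤ) ≤ ⌊β⌋ := by omega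
    have h4' : (a : ℝ) + 2 ≤ b := by exact_mod_cast h4
    have h5' : (2 : ℝ) ≤ ⌊β⌋ := by exact_mod_cast h5
    have h6 : 2 ≤ r - l := by linarith
    have h7 : 2 * (β - 1) ≤ (r - l) * (β - 1) :=
      mul_le_mul_of_nonneg_right h6 (by linarith)
    linarith
  refine ⟨key, ?_, by linarith⟩
  have hk : (b : ℝ) = a + 1 := by exact_mod_cast key
  linarith
end

section
/- Let β > 1 with β ∉ ℤ and β ∉ (1,√3] ∪ (2,√5], let A = {0,1,…,⌊β⌋}, l = −β⌊β⌋/(β²−1), r = ⌊β⌋/(β²−1), and J = [l,r]. Define D : J → A by D(x) = 0 for x ∈ [−r/β, r], and D(x) = a for x ∈ [−a/β − r/β, −a/β − r/β + 1/β) for each a ∈ {1,…,⌊β⌋}. Then these intervals partition J, and for every x ∈ J the digit a = D(x) satisfies: (i) −βx − a ∈ J, and (ii) |−βx − a| ≤ |−βx − b| for every b ∈ A with −βx − b ∈ J. Consequently the optimal transformation is T_o(x) = −βx − D(x), mapping J to J. -/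
/-- Proposition, first part: let `β > 1`, `β ∉ ℤ`,
`β ∉ (1,√3] ∪ (2,√5]`, `l = −β⌊β⌋/(β²−1)`, `r = ⌊β⌋/(β²−1)`, `J = [l,r]`.
The intervals `Iv 0 = [−r/β, r]` and `Iv a = [−a/β − r/β, −a/β − r/β + 1/β)` for
`a ∈ {1,…,⌊β⌋}` partition `J`, and for `x ∈ J` the digit `a` with `x ∈ Iv a` satisfies
(i) `−βx − a ∈ J` and (ii) `|−βx − a| ≤ |−βx − b|` for all `b ∈ {0,…,⌊β⌋}` with
`−βx − b ∈ J`. Hence `T_o x = −βx − a` maps `J` to `J`. -/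
theorem optimal_transformation_neg_base_generic
    (β : ℝ) (hβ : 1 < β) (hβZ : ∀ n : ℤ, β ≠ n)
    (hβ35 : β ∉ Set.Ioc (1 : ℝ) (Real.sqrt 3) ∪ Set.Ioc (2 : ℝ) (Real.sqrt 5))
    (l r : ℝ) (hl : l = -β * ⌊β⌋ / (β ^ 2 - 1)) (hr : r = (⌊β⌋ : ℝ) / (β ^ 2 - 1))
    (Iv : ℤ → Set ℝ)
    (hIv0 : Iv 0 = Set.Icc (-r / β) r)
    (hIv : ∀ a : ℤ, 1 ≤ a →
      Iv a = Set.Ico (-(a : ℝ) / β - r / β) (-(a : ℝ) / β - r / β + 1 / β)) :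
    (∀ x ∈ Set.Icc l r, ∃! a : ℤ, 0 ≤ a ∧ a ≤ ⌊β⌋ ∧ x ∈ Iv a) ∧
    (∀ x ∈ Set.Icc l r, ∀ a : ℤ, 0 ≤ a → a ≤ ⌊β⌋ → x ∈ Iv a →
      -β * x - a ∈ Set.Icc l r ∧
      ∀ b : ℤ, 0 ≤ b → b ≤ ⌊β⌋ → -β * x - b ∈ Set.Icc l r →
        |-β * x - a| ≤ |-β * x - b|) := by
  have hβ0 : 0 < β := by linarith
  have hq : 0 < β ^ 2 - 1 := by nlinarith
  obtain ⟨n, hn⟩ : ∃ n : ℤ, n = ⌊β⌋ := ⟨_, rfl⟩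
  have hn1 : (n : ℝ) ≤ β := hn ▸ Int.floor_le β
  have hn2 : β < (n : ℝ) + 1 := hn ▸ Int.lt_floor_add_one β
  rw [← hn] at hl hr ⊢
  have hnpos : 1 ≤ n := by
    have : (0 : ℝ) < n := by linarith
    exact_mod_cast this
  have hnposR : (1 : ℝ) ≤ n := by exact_mod_cast hnpos
  have hrm : r * (β ^ 2 - 1) = n := by rw [hr]; field_simp
  have hr0 : 0 < r := by rw [hr]; positivity
  have hlr : l = -β * r := by rw [hl, hr]; ring
  have hkey : 2 * (n : ℝ) + 1 ≤ β ^ 2 := by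
    simp only [Set.mem_union, Set.mem_Ioc, not_or, not_and, not_le] at hβ35
    rcases (by omega : n = 1 ∨ n = 2 ∨ 3 ≤ n) with h | h | h
    · have h3 := hβ35.1 hβ
      rw [Real.sqrt_lt' hβ0] at h3
      rw [h]; push_cast; linarith
    · have h2 : (2 : ℝ) < β := by
        have := hβZ 2
        rw [h] at hn1
        push_cast at hn1 this
        exact lt_of_le_of_ne hn1 (Ne.symm this)
      have h5 := hβ35.2 h2
      rw [Real.sqrt_lt' hβ0] at h5
      rw [h]; push_cast; linarith
    · have : (3 : ℝ) ≤ n := by exact_mod_cast h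
      nlinarith
  have hr2 : r ≤ 1 / 2 := by
    rw [hr, div_le_iff₀ hq]; linarith
  have hr1 : 1 ≤ r * (β + 1) := by
    by_contra hc
    push Not at hc
    nlinarith
  have h0 : ∀ x ∈ Set.Icc l r, (x ∈ Iv 0 ↔ -β * x ≤ r) := by
    intro x hx
    rw [hIv0, Set.mem_Icc, div_le_iff₀ hβ0]
    constructor
    · rintro ⟨h, -⟩; linarith
    · intro h; exact ⟨by linarith, hx.2⟩
  have h1 : ∀ x, ∀ a : ℤ, 1 ≤ a → (x ∈ Iv a ↔ -β * x - a ≤ r ∧ r - 1 < -β * x - a) := by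
    intro x a ha
    have e1 : -(a : ℝ) / β - r / β = (-a - r) / β := by ring
    have e2 : (-(a : ℝ) - r) / β + 1 / β = (-a - r + 1) / β := by ring
    rw [hIv a ha, Set.mem_Ico, e1, e2, div_le_iff₀ hβ0, lt_div_iff₀ hβ0]
    constructor
    · rintro ⟨h, h'⟩; constructor <;> linarith
    · rintro ⟨h, h'⟩; constructor <;> linarith
  have hup : ∀ x ∈ Set.Icc l r, -β * x ≤ n + r := by
    intro x hx
    have := mul_le_mul_of_nonneg_left hx.1 hβ0.le
    rw [hlr] at this
    nlinarith
  have hdn : ∀ x ∈ Set.Icc l r, l ≤ -β * x := by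
    intro x hx
    have := mul_le_mul_of_nonneg_left hx.2 hβ0.le
    rw [hlr]; linarith
  have hch : ∀ x ∈ Set.Icc l r, ∀ a : ℤ, 0 ≤ a → x ∈ Iv a →
      -β * x - a ≤ r ∧ (a = 0 ∨ r - 1 < -β * x - a) := by
    intro x hx a ha hxa
    rcases (by omega : a = 0 ∨ 1 ≤ a) with h | h
    · subst h
      have := (h0 x hx).1 hxa
      exact ⟨by push_cast; linarith, Or.inl rfl⟩
    · have := (h1 x a h).1 hxa
      exact ⟨this.1, Or.inr this.2⟩
  have hmin : ∀ x ∈ Set.Icc l r, ∀ a : ℤ, 0 ≤ a → x ∈ Iv a → ∀ b : ℤ, 0 ≤ b →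
      -β * x - b ≤ r → a ≤ b := by
    intro x hx a ha hxa b hb hxb
    rcases (hch x hx a ha hxa).2 with h | h
    · omega
    · have : (a : ℝ) < b + 1 := by linarith
      have : a < b + 1 := by exact_mod_cast this
      omega
  refine ⟨?_, ?_⟩
  · intro x hx
    apply existsUnique_of_exists_of_unique
    · by_cases hy : -β * x ≤ r
      · exact ⟨0, le_rfl, by omega, (h0 x hx).2 hy⟩
      · push Not at hy
        have hc : 1 ≤ ⌈-β * x - r⌉ := by
          have : 0 < ⌈-β * x - r⌉ := Int.ceil_pos.2 (by linarith)
          omega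
        refine ⟨⌈-β * x - r⌉, by omega, Int.ceil_le.2 (by linarith [hup x hx]), ?_⟩
        rw [h1 x _ hc]
        have c1 := Int.le_ceil (-β * x - r)
        have c2 := Int.ceil_lt_add_one (-β * x - r)
        constructor <;> linarith
    · rintro a b ⟨ha, -, hxa⟩ ⟨hb, -, hxb⟩
      exact le_antisymm (hmin x hx a ha hxa b hb (hch x hx b hb hxb).1)
        (hmin x hx b hb hxb a ha (hch x hx a ha hxa).1)
  · intro x hx a ha han hxa
    obtain ⟨c1, c2⟩ := hch x hx a ha hxa
    refine ⟨⟨?_, c1⟩, ?_⟩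
    · rcases c2 with h | h
      · subst h
        have := hdn x hx
        push_cast; linarith
      · rw [hlr]; linarith
    · intro b hb hbn hxb
      have hab := hmin x hx a ha hxa b hb hxb.2
      rcases hab.eq_or_lt with h | h
      · rw [h]
      · have : (a : ℝ) + 1 ≤ b := by exact_mod_cast h
        rw [abs_le]
        have := neg_abs_le (-β * x - b)
        constructor <;> linarith
end

section
/- Let β ∈ (1,√3] ∪ (2,√5] with β ∉ ℤ, let A = {0,1,…,⌊β⌋}, l = −β⌊β⌋/(β²−1), r = ⌊β⌋/(β²−1), and J = [l,r]. Define D : J → A by D(x) = 0 for x ∈ [−1/(2β), r], D(x) = ⌊β⌋ for x ∈ [l, −(⌊β⌋−1)/β − 1/(2β)), and D(x) = 1 otherwise on J. Then for every x ∈ J the digit a = D(x) satisfies: (i) −βx − a ∈ J, and (ii) |−βx − a| ≤ |−βx − b| for every b ∈ A with −βx − b ∈ J. -/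
/-- Proposition, second part: let `β ∈ (1,√3] ∪ (2,√5]`, `β ∉ ℤ`,
`l = −β⌊β⌋/(β²−1)`, `r = ⌊β⌋/(β²−1)`, `J = [l,r]`. Define `D(x) = 0` for
`x ∈ [−1/(2β), r]`, `D(x) = ⌊β⌋` for `x ∈ [l, −(⌊β⌋−1)/β − 1/(2β))`, and `D(x) = 1`
otherwise. Then for every `x ∈ J` the digit `a = D(x)` satisfies (i) `−βx − a ∈ J` and
(ii) `|−βx − a| ≤ |−βx − b|` for every `b ∈ {0,…,⌊β⌋}` with `−βx − b ∈ J`. -/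
theorem optimal_transformation_neg_base_special
    (β : ℝ) (hβ : β ∈ Set.Ioc (1 : ℝ) (Real.sqrt 3) ∪ Set.Ioc (2 : ℝ) (Real.sqrt 5))
    (hβZ : ∀ n : ℤ, β ≠ n)
    (l r : ℝ) (hl : l = -β * ⌊β⌋ / (β ^ 2 - 1)) (hr : r = (⌊β⌋ : ℝ) / (β ^ 2 - 1))
    (D : ℝ → ℤ)
    (hD0 : ∀ x ∈ Set.Icc (-1 / (2 * β)) r, D x = 0)
    (hDm : ∀ x ∈ Set.Ico l (-((⌊β⌋ : ℝ) - 1) / β - 1 / (2 * β)), D x = ⌊β⌋)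
    (hD1 : ∀ x ∈ Set.Icc l r, x ∉ Set.Icc (-1 / (2 * β)) r →
      x ∉ Set.Ico l (-((⌊β⌋ : ℝ) - 1) / β - 1 / (2 * β)) → D x = 1) :
    ∀ x ∈ Set.Icc l r,
      -β * x - D x ∈ Set.Icc l r ∧
      ∀ b : ℤ, 0 ≤ b → b ≤ ⌊β⌋ → -β * x - b ∈ Set.Icc l r →
        |-β * x - D x| ≤ |-β * x - b| := by
  have key : 1 < β ∧ 1 ≤ ⌊β⌋ ∧ ⌊β⌋ ≤ 2 ∧ β ^ 2 - 1 ≤ 2 * (⌊β⌋ : ℝ) := by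
    rcases hβ with ⟨h1, h2⟩ | ⟨h1, h2⟩
    · have h3 : β ^ 2 ≤ 3 := (Real.le_sqrt (by linarith) (by norm_num)).1 h2
      have hf : ⌊β⌋ = 1 := by
        rw [Int.floor_eq_iff]
        push_cast
        constructor <;> nlinarith
      rw [hf]
      push_cast
      refine ⟨h1, by norm_num, by norm_num, by linarith⟩
    · have h3 : β ^ 2 ≤ 5 := (Real.le_sqrt (by linarith) (by norm_num)).1 h2
      have hf : ⌊β⌋ = 2 := by
        rw [Int.floor_eq_iff]
        push_cast
        constructor <;> nlinarith
      rw [hf]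
      push_cast
      refine ⟨by linarith, by norm_num, by norm_num, by linarith⟩
  obtain ⟨hb, hm1, hm2, hsq⟩ := key
  generalize ⌊β⌋ = m at *
  have hpos : 0 < β ^ 2 - 1 := by nlinarith
  have hr2 : 1 / 2 ≤ r := by
    rw [hr, le_div_iff₀ hpos]
    linarith
  have hlr : l = -β * r := by rw [hl, hr]; ring
  have hll : -β * l = m + r := by
    rw [hl, hr]
    field_simp
    ring
  have hl2 : l ≤ -(1 / 2) := by nlinarith
  have hb0 : 0 < β := by linarith
  intro x hx
  obtain ⟨hx1, hx2⟩ := hx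
  have hy1 : l ≤ -β * x := by nlinarith
  have hy2 : -β * x ≤ m + r := by nlinarith
  have e0 : -1 / (2 * β) ≤ x ↔ -β * x ≤ 1 / 2 := by
    rw [div_le_iff₀ (by linarith)]
    constructor <;> intro h <;> linarith
  have em : x < -((m : ℝ) - 1) / β - 1 / (2 * β) ↔ (m : ℝ) - 1 / 2 < -β * x := by
    have : -((m : ℝ) - 1) / β - 1 / (2 * β) = (1 / 2 - m) / β := by
      field_simp
      ring
    rw [this, lt_div_iff₀ hb0]
    constructor <;> intro h <;> linarith
  by_cases c0 : -β * x ≤ 1 / 2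
  · rw [hD0 x ⟨e0.2 c0, hx2⟩]
    generalize -β * x = y at *
    refine ⟨⟨by push_cast; linarith, by push_cast; linarith⟩, ?_⟩
    intro b h0 _ _
    rcases h0.eq_or_lt with h | h
    · rw [← h]
    · have : (1 : ℝ) ≤ b := by exact_mod_cast h
      rw [← sq_le_sq]
      push_cast
      nlinarith
  · by_cases cm : (m : ℝ) - 1 / 2 < -β * x
    · rw [hDm x ⟨hx1, em.2 cm⟩]
      generalize -β * x = y at *
      refine ⟨⟨by linarith, by linarith⟩, ?_⟩
      intro b _ h0 _
      rcases h0.eq_or_lt with h | h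
      · rw [← h]
      · have : (b : ℝ) + 1 ≤ m := by exact_mod_cast h
        rw [← sq_le_sq]
        nlinarith
    · rw [hD1 x ⟨hx1, hx2⟩ (fun h => c0 (e0.1 h.1)) (fun h => cm (em.1 h.2))]
      generalize -β * x = y at *
      have hm : m = 2 := by
        rcases (show m = 1 ∨ m = 2 by omega) with h | h
        · subst h
          push_cast at cm
          exfalso
          linarith
        · exact h
      subst hm
      push_cast at *
      refine ⟨⟨by linarith, by linarith⟩, ?_⟩
      intro b h1 h2 _
      rw [← sq_le_sq]
      rcases (show b = 0 ∨ b = 1 ∨ b = 2 by omega) with h | h | h <;> subst h <;>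
        push_cast <;> nlinarith
end

section
/- Let β > 1 with β ∉ ℕ and let A = {0,1,…,⌊β⌋}. Then the set of x ∈ J_{−β,A} = [−β⌊β⌋/(β²−1), ⌊β⌋/(β²−1)] that possess an optimal (−β,A)-representation has Lebesgue measure zero; i.e., almost every x ∈ J_{−β,A} has no optimal representation. -/
namespace NegBase

lemma rep_tail {γ : ℝ} (hγ : γ ≠ 0) {B : Set ℝ} {b : ℕ → ℝ} {x : ℝ} (h : IsRep γ B b x) :
    IsRep γ B (fun i => b (i + 1)) (γ * x - b 0) := by
  refine ⟨fun i => h.1 _, ?_⟩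
  have h1 := (hasSum_nat_add_iff' 1).mpr h.2
  have h2 := h1.mul_left γ
  have e1 : (fun i => b (i + 1) / γ ^ (i + 1)) = fun i => γ * (b (i + 1) / γ ^ (i + 1 + 1)) := by
    funext i
    rw [pow_succ γ (i + 1)]
    field_simp
  have e2 : γ * x - b 0 = γ * (x - ∑ i ∈ Finset.range 1, b i / γ ^ (i + 1)) := by
    simp
    field_simp
  rw [e1, e2]
  exact h2

/-- prepend a digit -/
def cons (d : ℝ) (b : ℕ → ℝ) : ℕ → ℝ := fun i => Nat.casesOn i d b

lemma rep_cons {γ : ℝ} (hγ : γ ≠ 0) {B : Set ℝ} {b : ℕ → ℝ} {x d : ℝ} (hd : d ∈ B)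
    (h : IsRep γ B b (γ * x - d)) : IsRep γ B (cons d b) x := by
  refine ⟨fun i => ?_, ?_⟩
  · cases i with
    | zero => exact hd
    | succ i => exact h.1 i
  · rw [← hasSum_nat_add_iff' 1]
    have h2 := h.2.mul_left γ⁻¹
    have e1 : (fun n => cons d b (n + 1) / γ ^ (n + 1 + 1)) =
        fun i => γ⁻¹ * (b i / γ ^ (i + 1)) := by
      funext i
      simp only [cons]
      rw [pow_succ γ (i + 1)]
      field_simp
    have e2 : x - ∑ i ∈ Finset.range 1, cons d b i / γ ^ (i + 1) = γ⁻¹ * (γ * x - d) := by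
      simp [cons]
      field_simp
    rw [e1, e2]
    exact h2

lemma sum_cons {γ : ℝ} (hγ : γ ≠ 0) (c : ℕ → ℝ) (x : ℝ) (n : ℕ) :
    x - ∑ i ∈ Finset.range (n + 1), c i / γ ^ (i + 1) =
      γ⁻¹ * ((γ * x - c 0) - ∑ i ∈ Finset.range n, c (i + 1) / γ ^ (i + 1)) := by
  rw [Finset.sum_range_succ', mul_sub, Finset.mul_sum]
  have : ∀ i ∈ Finset.range n, c (i + 1) / γ ^ (i + 1 + 1) = γ⁻¹ * (c (i + 1) / γ ^ (i + 1)) := by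
    intro i _
    rw [pow_succ γ (i + 1)]
    field_simp
  rw [Finset.sum_congr rfl this]
  field_simp
  ring

lemma opt_tail {γ : ℝ} (hγ : γ ≠ 0) {B : Set ℝ} {c : ℕ → ℝ} {x : ℝ} (h : IsOptimalRep γ B c x) :
    IsOptimalRep γ B (fun i => c (i + 1)) (γ * x - c 0) := by
  refine ⟨rep_tail hγ h.1, fun b hb n hn => ?_⟩
  have h1 := h.2 (cons (c 0) b) (rep_cons hγ (h.1.1 0) hb) (n + 1) (by omega)
  rw [sum_cons hγ, sum_cons hγ, abs_mul, abs_mul] at h1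
  exact le_of_mul_le_mul_left h1 (abs_pos.mpr (inv_ne_zero hγ))

lemma opt_one {γ : ℝ} (hγ : γ ≠ 0) {B : Set ℝ} {c b : ℕ → ℝ} {x : ℝ}
    (h : IsOptimalRep γ B c x) (hb : IsRep γ B b x) : |γ * x - c 0| ≤ |γ * x - b 0| := by
  have h1 := h.2 b hb 1 le_rfl
  rw [sum_cons hγ, sum_cons hγ, abs_mul, abs_mul] at h1
  simpa using le_of_mul_le_mul_left h1 (abs_pos.mpr (inv_ne_zero hγ))

lemma opt_two {γ : ℝ} (hγ : γ ≠ 0) {B : Set ℝ} {c b : ℕ → ℝ} {x : ℝ}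
    (h : IsOptimalRep γ B c x) (hb : IsRep γ B b x) :
    |γ * (γ * x - c 0) - c 1| ≤ |γ * (γ * x - b 0) - b 1| := by
  have h1 := h.2 b hb (1 + 1) (by norm_num)
  rw [sum_cons hγ c, sum_cons hγ b, abs_mul, abs_mul] at h1
  have h2 := le_of_mul_le_mul_left h1 (abs_pos.mpr (inv_ne_zero hγ))
  rw [sum_cons hγ (fun i => c (i + 1)), sum_cons hγ (fun i => b (i + 1)), abs_mul, abs_mul] at h2
  simpa using le_of_mul_le_mul_left h2 (abs_pos.mpr (inv_ne_zero hγ))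

lemma rep_bdd {β : ℝ} (hβ : 1 < β) {M : ℤ} :
    ∃ C : ℝ, 0 ≤ C ∧ ∀ x ∈ RepSet (-β) (digitSet M), |x| ≤ C := by
  have hs : Summable (fun i : ℕ => (M : ℝ) * (β⁻¹) ^ (i + 1)) :=
    ((summable_nat_add_iff 1).mpr
      (summable_geometric_of_lt_one (by positivity) (inv_lt_one_of_one_lt₀ hβ))).mul_left _
  refine ⟨|∑' i : ℕ, (M : ℝ) * (β⁻¹) ^ (i + 1)|, abs_nonneg _, ?_⟩
  rintro x ⟨b, hb, hsum⟩
  have hle : ∀ i, ‖b i / (-β) ^ (i + 1)‖ ≤ (M : ℝ) * (β⁻¹) ^ (i + 1) := by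
    intro i
    obtain ⟨k, hk, hk'⟩ := hb i
    have h0 : (0 : ℝ) ≤ k := by exact_mod_cast hk.1
    have h1 : (k : ℝ) ≤ M := by exact_mod_cast hk.2
    rw [← hk', Real.norm_eq_abs, abs_div, abs_pow, abs_neg, abs_of_pos (by linarith : 0 < β),
      abs_of_nonneg h0, inv_pow, div_eq_mul_inv]
    exact mul_le_mul_of_nonneg_right h1 (by positivity)
  have := tsum_of_norm_bounded hs.hasSum hle
  rw [hsum.tsum_eq, Real.norm_eq_abs] at this
  exact this.trans (le_abs_self _)

lemma le_of_forall_pow {β C x y : ℝ} (hβ : 1 < β) (h : ∀ n : ℕ, x ≤ y + C / β ^ n) : x ≤ y := by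
  have ht : Filter.Tendsto (fun n : ℕ => y + C / β ^ n) Filter.atTop (nhds (y + 0)) := by
    refine Filter.Tendsto.add tendsto_const_nhds ?_
    have := (tendsto_pow_atTop_nhds_zero_of_lt_one (r := β⁻¹) (by positivity)
      (inv_lt_one_of_one_lt₀ hβ)).const_mul C
    simpa [div_eq_mul_inv] using this
  rw [add_zero] at ht
  exact ge_of_tendsto' ht h

lemma rep_mem {β t : ℝ} (hβ : 1 < β) {M : ℤ} (ht : β ^ 2 * t = t + M) {x : ℝ}
    (hx : x ∈ RepSet (-β) (digitSet M)) : -(β * t) ≤ x ∧ x ≤ t := by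
  obtain ⟨C', hC', hbd⟩ := rep_bdd hβ (M := M)
  have hβ0 : 0 < β := by linarith
  obtain ⟨C, hC1, hC2⟩ : ∃ C, C' + |t| ≤ C ∧ C' + |β * t| ≤ C :=
    ⟨_, le_max_left _ _, le_max_right _ _⟩
  have key : ∀ n : ℕ, ∀ x ∈ RepSet (-β) (digitSet M),
      -(β * t) ≤ x + C / β ^ n ∧ x ≤ t + C / β ^ n := by
    intro n
    induction n with
    | zero =>
      intro x hx
      have h1 := abs_le.mp (hbd x hx)
      have h2 := neg_abs_le t
      have h3 := neg_abs_le (β * t)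
      simp only [pow_zero, div_one]
      constructor <;> linarith
    | succ n ih =>
      rintro x ⟨b, hb⟩
      obtain ⟨k, hk, hk'⟩ := hb.1 0
      dsimp only at hk'
      have h0 : (0 : ℝ) ≤ b 0 := by rw [← hk']; exact_mod_cast hk.1
      have h1 : b 0 ≤ M := by rw [← hk']; exact_mod_cast hk.2
      obtain ⟨h2, h3⟩ := ih _ ⟨_, rep_tail (by linarith : -β ≠ 0) hb⟩
      have h4 : C / β ^ n = β * (C / β ^ (n + 1)) := by
        rw [pow_succ]; field_simp
      rw [h4] at h2 h3
      constructor
      · refine le_of_mul_le_mul_left ?_ hβ0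
        nlinarith
      · refine le_of_mul_le_mul_left ?_ hβ0
        nlinarith
  exact ⟨le_of_forall_pow hβ fun n => (key n x hx).1, le_of_forall_pow hβ fun n => (key n x hx).2⟩

lemma exists_digit {β t : ℝ} (hβ : 1 < β) {M : ℤ} (hM : 0 < M) (hJ : 1 ≤ t + β * t)
    (ht : β ^ 2 * t = t + M) (x : ℝ) (h : x ∈ Set.Icc (-(β * t)) t) :
    ∃ k : ℤ, k ∈ Set.Icc 0 M ∧ -β * x - k ∈ Set.Icc (-(β * t)) t := by
  obtain ⟨h1, h2⟩ := h
  by_cases hy : -β * x ≤ t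
  · refine ⟨0, ⟨le_rfl, hM.le⟩, ?_, by simpa using hy⟩
    push_cast
    nlinarith
  · push Not at hy
    refine ⟨⌈-β * x - t⌉, ⟨Int.ceil_nonneg (by linarith), Int.ceil_le.mpr ?_⟩, ?_, ?_⟩
    · nlinarith
    · have := Int.ceil_lt_add_one (-β * x - t)
      linarith
    · have := Int.le_ceil (-β * x - t)
      linarith

lemma exists_rep {β t : ℝ} (hβ : 1 < β) {M : ℤ} (hM : 0 < M) (hJ : 1 ≤ t + β * t)
    (ht : β ^ 2 * t = t + M) {x : ℝ} (hx : x ∈ Set.Icc (-(β * t)) t) :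
    ∃ b, IsRep (-β) (digitSet M) b x := by
  choose! f hf1 hf2 using exists_digit hβ hM hJ ht
  have hβ0 : 0 < β := by linarith
  let r : ℕ → ℝ := fun n => (fun z => -β * z - f z)^[n] x
  have hr0 : r 0 = x := rfl
  have hrs : ∀ n, r (n + 1) = -β * r n - f (r n) := fun n => by
    simp only [r, Function.iterate_succ_apply']
  have hr : ∀ n, r n ∈ Set.Icc (-(β * t)) t := by
    intro n
    induction n with
    | zero => exact hx
    | succ n ih => rw [hrs]; exact hf2 _ ih
  have hsum : ∀ n, ∑ i ∈ Finset.range n, (f (r i) : ℝ) / (-β) ^ (i + 1) =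
      x - r n / (-β) ^ n := by
    intro n
    induction n with
    | zero => simp [hr0]
    | succ n ih =>
      rw [Finset.sum_range_succ, ih, hrs, pow_succ]
      have : (-β) ^ n ≠ 0 := pow_ne_zero _ (by linarith)
      field_simp
      ring
  refine ⟨fun i => f (r i), fun i => ⟨_, hf1 _ (hr i), rfl⟩, ?_⟩
  have hs : Summable (fun i : ℕ => (M : ℝ) * (β⁻¹) ^ (i + 1)) :=
    ((summable_nat_add_iff 1).mpr
      (summable_geometric_of_lt_one (by positivity) (inv_lt_one_of_one_lt₀ hβ))).mul_left _
  have hle : ∀ i, ‖(f (r i) : ℝ) / (-β) ^ (i + 1)‖ ≤ (M : ℝ) * (β⁻¹) ^ (i + 1) := by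
    intro i
    have hk := hf1 _ (hr i)
    have h0 : (0 : ℝ) ≤ f (r i) := by exact_mod_cast hk.1
    have h1 : (f (r i) : ℝ) ≤ M := by exact_mod_cast hk.2
    rw [Real.norm_eq_abs, abs_div, abs_pow, abs_neg, abs_of_pos (by linarith : 0 < β),
      abs_of_nonneg h0, inv_pow, div_eq_mul_inv]
    exact mul_le_mul_of_nonneg_right h1 (by positivity)
  rw [(Summable.of_norm_bounded hs hle).hasSum_iff_tendsto_nat]
  simp_rw [hsum]
  have hz : Filter.Tendsto (fun n : ℕ => r n / (-β) ^ n) Filter.atTop (nhds 0) := by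
    have hlim := (tendsto_pow_atTop_nhds_zero_of_lt_one (r := β⁻¹) (by positivity)
      (inv_lt_one_of_one_lt₀ hβ)).const_mul (|t| + |β * t|)
    rw [mul_zero] at hlim
    refine squeeze_zero_norm (fun n => ?_) hlim
    rw [Real.norm_eq_abs, abs_div, abs_pow, abs_neg, abs_of_pos hβ0, inv_pow, div_eq_mul_inv]
    refine mul_le_mul_of_nonneg_right ?_ (by positivity)
    have h1 := (hr n).1
    have h2 := (hr n).2
    have h3 := le_abs_self t
    have h4 := le_abs_self (β * t)
    have h5 := abs_nonneg t
    have h6 := abs_nonneg (β * t)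
    rw [abs_le]
    constructor <;> linarith
  simpa using hz.const_sub x

lemma digit_forced {β t b : ℝ} (hβ : 1 < β) {M : ℤ} (hM : 0 < M) (hJ : 1 ≤ t + β * t)
    (ht : β ^ 2 * t = t + M) (hb2 : b ≤ 1 / 2) (hb : b = t ∨ b = 1 / 2)
    {x : ℝ} {c : ℕ → ℝ} (hc : IsOptimalRep (-β) (digitSet M) c x) {d : ℤ} (hd : d ∈ Set.Icc 0 M)
    (hz : -β * x - d ∈ Set.Icc (-(β * t)) t) (h1 : d = 0 ∨ b - 1 < -β * x - d)
    (h2 : d = M ∨ -β * x - d < b) : c 0 = d := by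
  have hγ : -β ≠ 0 := by linarith
  obtain ⟨e, he⟩ := exists_rep hβ hM hJ ht hz
  have hle := opt_one hγ hc (rep_cons hγ (d := d) ⟨d, hd, rfl⟩ he)
  change |-β * x - c 0| ≤ |-β * x - d| at hle
  have hmem := rep_mem hβ ht ⟨_, rep_tail hγ hc.1⟩
  obtain ⟨k, hk, hk'⟩ := hc.1.1 0
  dsimp only at hk'
  rw [← hk'] at hle hmem ⊢
  rcases lt_trichotomy k d with hlt | heq | hgt
  · exfalso
    have h3 : (k : ℝ) + 1 ≤ d := by exact_mod_cast hlt
    have h4 : b - 1 < -β * x - d := by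
      rcases h1 with h1 | h1
      · have := hk.1; omega
      · exact h1
    rcases hb with hb | hb
    · linarith [hmem.2]
    · rw [← sq_le_sq] at hle
      nlinarith
  · rw [heq]
  · exfalso
    have h3 : (d : ℝ) + 1 ≤ k := by exact_mod_cast hgt
    have h4 : -β * x - d < b := by
      rcases h2 with h2 | h2
      · have := hk.2; omega
      · exact h2
    rw [← sq_le_sq] at hle
    nlinarith

lemma hole {β t b a : ℝ} (hβ : 1 < β) {M : ℤ} (hM : 0 < M) (hMβ : (M : ℝ) < β)
    (hJ : 1 ≤ t + β * t) (ht : β ^ 2 * t = t + M) (hbt : b ≤ t) (hb2 : b ≤ 1 / 2)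
    (hb : b = t ∨ b = 1 / 2) (ha1 : 1 - β * t ≤ a) (ha2 : (β - M) / (2 * β) ≤ a)
    {x : ℝ} {c : ℕ → ℝ} (hc : IsOptimalRep (-β) (digitSet M) c x) {d : ℤ} (hd : 0 ≤ d)
    (hdM : d < M) (h1 : a < -β * x - d) (h2 : -β * x - d < b) : False := by
  have hγ : -β ≠ 0 := by linarith
  have hβ0 : 0 < β := by linarith
  have ha0 : 0 < a := lt_of_lt_of_le (div_pos (by linarith) (by linarith)) ha2
  have ht0 : 0 < t := by linarith
  have hc0 : c 0 = d := digit_forced hβ hM hJ ht hb2 hb hc ⟨hd, hdM.le⟩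
    ⟨by nlinarith, by linarith⟩ (Or.inr (by linarith)) (Or.inr h2)
  set u := -β * x - d with hu
  have hm : -β * (u - 1) - M ∈ Set.Icc (-(β * t)) t := by
    constructor
    · nlinarith
    · nlinarith
  obtain ⟨e, he⟩ := exists_rep hβ hM hJ ht hm
  have he1 := rep_cons (x := u - 1) (B := digitSet M) hγ (d := (M : ℝ)) ⟨M, ⟨hM.le, le_rfl⟩, rfl⟩ he
  have he2 : IsRep (-β) (digitSet M) (cons ((d + 1 : ℤ) : ℝ) (cons M e)) x := by
    refine rep_cons hγ ⟨d + 1, ⟨by omega, by omega⟩, rfl⟩ ?_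
    convert he1 using 1
    push_cast
    ring
  have hle := opt_two hγ hc he2
  change |-β * (-β * x - c 0) - c 1| ≤ |-β * (-β * x - ((d + 1 : ℤ) : ℝ)) - M| at hle
  have h3 : -β * x - ((d + 1 : ℤ) : ℝ) = u - 1 := by push_cast; ring
  rw [h3, hc0, ← hu] at hle
  obtain ⟨k, hk, hk'⟩ := hc.1.1 1
  dsimp only at hk'
  have h0 : (0 : ℝ) ≤ c 1 := by rw [← hk']; exact_mod_cast hk.1
  have h4 : β * u ≤ |-β * u - c 1| := by
    have := neg_le_abs (-β * u - c 1)
    linarith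
  have h5 : (β - M) < 2 * β * u := by
    have : (β - M) / (2 * β) < u := by linarith
    rw [div_lt_iff₀ (by linarith)] at this
    linarith
  have h6 : |-β * (u - 1) - M| < β * u := by
    rw [abs_lt]
    constructor <;> linarith
  linarith

open MeasureTheory in
lemma core {β t b a : ℝ} (hβ : 1 < β) {M : ℤ} (hM : 0 < M)
    (ht : β ^ 2 * t = t + M) (hbt : b ≤ t) (hab : a < b) (ha1 : 1 - β * t ≤ a) (S : Set ℝ)
    (hS : S ⊆ Set.Icc (-(β * t)) t)
    (hstep : ∀ x ∈ S, ∀ d : ℤ, d ∈ Set.Icc 0 M → -β * x - d ∈ Set.Icc (-(β * t)) t →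
      (d = 0 ∨ b - 1 < -β * x - d) → (d = M ∨ -β * x - d < b) → -β * x - d ∈ S)
    (hhole : ∀ x ∈ S, ∀ d : ℤ, 0 ≤ d → d < M → a < -β * x - d → -β * x - d < b → False)
    {L c : ℝ} (hL : L = t + β * t) (hc : c * (β * L) = b - a) (hc1 : c ≤ 1) (hc0 : 0 ≤ c)
    (n : ℕ) : ∀ p q : ℝ, -(β * t) ≤ p → p ≤ q → q ≤ t →
      volume (S ∩ Set.Ioo p q) ≤ ENNReal.ofReal ((1 - c) * (q - p) + L / β ^ n) := by
  have hβ0 : 0 < β := by linarith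
  have hL0 : 0 ≤ L := by
    by_contra h
    push Not at h
    have : β * L < 0 := mul_neg_of_pos_of_neg hβ0 h
    nlinarith
  induction n with
  | zero =>
    intro p q h1 h2 h3
    refine (measure_mono Set.inter_subset_right).trans ?_
    rw [Real.volume_Ioo]
    apply ENNReal.ofReal_le_ofReal
    have : 0 ≤ (1 - c) * (q - p) := mul_nonneg (by linarith) (by linarith)
    simp only [pow_zero, div_one]
    linarith
  | succ n ih =>
    intro p q h1 h2 h3
    have hp1 : -β * p ≤ t + M := by nlinarith
    have hq1 : -(β * t) ≤ -β * q := by nlinarith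
    have hpq : -β * q ≤ -β * p := by nlinarith
    have hlen : -β * p - -β * q ≤ β * L := by nlinarith
    obtain ⟨d, s, hd, hs1, hs2, hs3, hs4, hs5⟩ : ∃ (d : ℤ) (s : ℝ), d ∈ Set.Icc 0 M ∧
        -β * q ≤ s ∧ s ≤ -β * p ∧ (s = -β * q ∨ (s = b + d - 1 ∧ 1 ≤ d)) ∧
        (d = 0 ∨ b + d - 1 ≤ s) ∧ (d = M ∨ -β * p ≤ b + d) := by
      by_cases hq : -β * p ≤ b
      · exact ⟨0, -β * q, ⟨le_rfl, hM.le⟩, le_rfl, hpq, Or.inl rfl, Or.inl rfl,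
          Or.inr (by push_cast; linarith)⟩
      · push Not at hq
        have hk1 : 0 < ⌈-β * p - b⌉ := Int.ceil_pos.mpr (by linarith)
        have hk2 := Int.ceil_lt_add_one (-β * p - b)
        have hk3 := Int.le_ceil (-β * p - b)
        have hm : ((min M ⌈-β * p - b⌉ : ℤ) : ℝ) ≤ ⌈-β * p - b⌉ := by
          exact_mod_cast min_le_right _ _
        have hd1 : 1 ≤ min M ⌈-β * p - b⌉ := le_min (by omega) (by omega)
        refine ⟨min M ⌈-β * p - b⌉, max (-β * q) (b + (min M ⌈-β * p - b⌉ : ℤ) - 1),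
          ⟨by omega, min_le_left _ _⟩, le_max_left _ _, max_le hpq (by linarith), ?_,
          Or.inr (le_max_right _ _), ?_⟩
        · rcases max_choice (-β * q) (b + (min M ⌈-β * p - b⌉ : ℤ) - 1) with h | h
          · exact Or.inl h
          · exact Or.inr ⟨h, hd1⟩
        · rcases min_choice M ⌈-β * p - b⌉ with h | h
          · exact Or.inl h
          · right
            rw [h]
            linarith
    have hdM : (d : ℝ) ≤ M := by exact_mod_cast hd.2
    have hlow : -(β * t) ≤ s - d := by
      rcases hs4 with h | h
      · rw [h]; push_cast; linarith
      · linarith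
    have hupp : -β * p - d ≤ t := by
      rcases hs5 with h | h
      · rw [h]; linarith
      · linarith
    -- right part of the interval
    have hA1 : volume (S ∩ Set.Ioo (-s / β) q) ≤
        ENNReal.ofReal ((1 - c) * (s - -β * q) / β) := by
      rcases hs3 with h | ⟨h, hd1⟩
      · have : -s / β = q := by rw [h]; field_simp
        rw [this]
        simp
      · have hw : c * (s - -β * q) ≤ min (s - -β * q) (b - a) := by
          apply le_min
          · nlinarith
          · rw [← hc]
            exact mul_le_mul_of_nonneg_left (by linarith) hc0
        have hsub : S ∩ Set.Ioo (-s / β) q ⊆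
            Set.Ico ((min (s - -β * q) (b - a) - s) / β) q := by
          rintro x ⟨hxS, hx1, hx2⟩
          refine ⟨?_, hx2⟩
          by_contra hcon
          push Not at hcon
          rw [lt_div_iff₀ hβ0] at hcon
          rw [div_lt_iff₀ hβ0] at hx1
          have hm := min_le_right (s - -β * q) (b - a)
          refine hhole x hxS (d - 1) (by omega) (by have := hd.2; omega) ?_ ?_
          · push_cast; linarith
          · push_cast; linarith
        refine (measure_mono hsub).trans ?_
        rw [Real.volume_Ico]
        apply ENNReal.ofReal_le_ofReal
        rw [le_div_iff₀ hβ0, sub_mul, div_mul_cancel₀ _ hβ0.ne']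
        linarith
    -- left part of the interval
    have hA2 : volume (S ∩ Set.Ioo p (-s / β)) ≤
        ENNReal.ofReal (β⁻¹ * ((1 - c) * (-β * p - s) + L / β ^ n)) := by
      have hsub : S ∩ Set.Ioo p (-s / β) ⊆
          ((-β) * ·) ⁻¹' ((· + -(d : ℝ)) ⁻¹' (S ∩ Set.Ioo (s - d) (-β * p - d))) := by
        rintro x ⟨hxS, hx1, hx2⟩
        rw [lt_div_iff₀ hβ0] at hx2
        have hx3 : -β * x < -β * p := by nlinarith
        have hx4 : s < -β * x := by linarith
        show -β * x + -(d : ℝ) ∈ S ∩ Set.Ioo (s - d) (-β * p - d)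
        rw [← sub_eq_add_neg]
        refine ⟨hstep x hxS d hd ⟨?_, ?_⟩ ?_ ?_, ?_, ?_⟩
        · linarith
        · linarith
        · exact hs4.imp id fun h => by linarith
        · exact hs5.imp id fun h => by linarith
        · show s - d < -β * x - d
          linarith
        · show -β * x - d < -β * p - d
          linarith
      refine (measure_mono hsub).trans ?_
      rw [Real.volume_preimage_mul_left (by linarith), measure_preimage_add_right,
        ENNReal.ofReal_mul (by positivity), inv_neg, abs_neg, abs_of_pos (inv_pos.mpr hβ0)]
      gcongr
      refine (ih _ _ hlow (by linarith) hupp).trans ?_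
      apply ENNReal.ofReal_le_ofReal
      apply le_of_eq
      ring
    have hcover : S ∩ Set.Ioo p q ⊆
        (S ∩ Set.Ioo p (-s / β)) ∪ ({-s / β} ∪ (S ∩ Set.Ioo (-s / β) q)) := by
      rintro x ⟨hxS, hx1, hx2⟩
      rcases lt_trichotomy x (-s / β) with h | h | h
      · exact Or.inl ⟨hxS, hx1, h⟩
      · exact Or.inr (Or.inl h)
      · exact Or.inr (Or.inr ⟨hxS, h, hx2⟩)
    have hP : 0 ≤ L / β ^ n := by positivity
    have hn1 : 0 ≤ (1 - c) * (-β * p - s) := mul_nonneg (by linarith) (by linarith)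
    have hn2 : 0 ≤ (1 - c) * (s - -β * q) := mul_nonneg (by linarith) (by linarith)
    calc volume (S ∩ Set.Ioo p q)
        ≤ volume (S ∩ Set.Ioo p (-s / β)) +
          (volume {-s / β} + volume (S ∩ Set.Ioo (-s / β) q)) :=
          (measure_mono hcover).trans ((measure_union_le _ _).trans
            (by gcongr; exact measure_union_le _ _))
      _ ≤ ENNReal.ofReal (β⁻¹ * ((1 - c) * (-β * p - s) + L / β ^ n)) +
          ENNReal.ofReal ((1 - c) * (s - -β * q) / β) := by
          rw [Real.volume_singleton, zero_add]
          gcongr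
      _ = ENNReal.ofReal ((1 - c) * (q - p) + L / β ^ (n + 1)) := by
          rw [← ENNReal.ofReal_add (by positivity) (by positivity)]
          congr 1
          rw [pow_succ]
          field_simp
          ring

open MeasureTheory in
lemma null_of_fraction {S : Set ℝ} {A B θ : ℝ} (hθ1 : θ < 1) (hθ0 : 0 ≤ θ)
    (hS : S ⊆ Set.Icc A B)
    (h : ∀ p q : ℝ, A ≤ p → p ≤ q → q ≤ B →
      volume (S ∩ Set.Ioo p q) ≤ ENNReal.ofReal (θ * (q - p))) : volume S = 0 := by
  have h' : ∀ p q : ℝ, p ≤ q → volume (S ∩ Set.Icc p q) ≤ ENNReal.ofReal (θ * (q - p)) := by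
    intro p q hpq
    have hsub : S ∩ Set.Icc p q ⊆
        (S ∩ Set.Ioo (max p A) (min q B)) ∪ {max p A, min q B} := by
      rintro x ⟨hxS, hx1, hx2⟩
      obtain ⟨hx3, hx4⟩ := hS hxS
      rcases (max_le hx1 hx3).lt_or_eq with h1 | h1
      · rcases (le_min hx2 hx4).lt_or_eq with h2 | h2
        · exact Or.inl ⟨hxS, h1, h2⟩
        · exact Or.inr (Or.inr h2)
      · exact Or.inr (Or.inl h1.symm)
    have hfin : volume ({max p A, min q B} : Set ℝ) = 0 :=
      (Set.toFinite _).measure_zero _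
    refine (measure_mono hsub).trans ((measure_union_le _ _).trans ?_)
    rw [hfin, add_zero]
    by_cases hle : max p A ≤ min q B
    · refine (h _ _ (le_max_right _ _) hle (min_le_right _ _)).trans ?_
      apply ENNReal.ofReal_le_ofReal
      apply mul_le_mul_of_nonneg_left _ hθ0
      linarith [le_max_left p A, min_le_left q B]
    · rw [Set.Ioo_eq_empty (fun h => hle h.le)]
      simp
  have hd := Besicovitch.ae_tendsto_measure_inter_div (volume : Measure ℝ) S
  have hF : ∀ᵐ x ∂(volume.restrict S), False := by
    filter_upwards [hd] with x hx
    have hle : (1 : ENNReal) ≤ ENNReal.ofReal θ := by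
      refine le_of_tendsto hx ?_
      filter_upwards [self_mem_nhdsWithin] with r hr
      have hr0 : 0 < r := hr
      rw [Real.volume_closedBall, Real.closedBall_eq_Icc]
      apply ENNReal.div_le_of_le_mul
      rw [← ENNReal.ofReal_mul hθ0]
      refine (h' _ _ (by linarith)).trans (le_of_eq ?_)
      congr 1
      ring
    rw [ENNReal.one_le_ofReal] at hle
    linarith
  rw [Filter.eventually_false_iff_eq_bot, ae_eq_bot, Measure.restrict_eq_zero] at hF
  exact hF

end NegBase

/-- Theorem, main result of the paper: for `β > 1`, `β ∉ ℕ`, and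
`A = {0,1,…,⌊β⌋}`, the set of `x ∈ J_{−β,A}` possessing an optimal
`(−β,A)`-representation has Lebesgue measure zero. -/
theorem almost_no_optimal_rep_neg_base
    (β : ℝ) (hβ : 1 < β) (hβN : ∀ n : ℕ, β ≠ n) :
    MeasureTheory.volume
      {x : ℝ | x ∈ RepSet (-β) (digitSet ⌊β⌋) ∧
        ∃ c : ℕ → ℝ, IsOptimalRep (-β) (digitSet ⌊β⌋) c x} = 0 := by
  have hβ0 : 0 < β := by linarith
  obtain ⟨M, hMdef⟩ : ∃ M : ℤ, M = ⌊β⌋ := ⟨_, rfl⟩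
  rw [← hMdef]
  have hM : 0 < M := by rw [hMdef]; exact Int.floor_pos.mpr hβ.le
  have hMβ : (M : ℝ) < β := by
    refine lt_of_le_of_ne (by rw [hMdef]; exact Int.floor_le β) fun h => ?_
    refine hβN M.toNat ?_
    rw [← h]
    have : ((M.toNat : ℤ) : ℝ) = M := by rw [Int.toNat_of_nonneg hM.le]
    exact_mod_cast this.symm
  have hMβ1 : β < M + 1 := by rw [hMdef]; exact Int.lt_floor_add_one β
  have hD : 0 < β ^ 2 - 1 := by nlinarith
  obtain ⟨t, htdef⟩ : ∃ t : ℝ, t = M / (β ^ 2 - 1) := ⟨_, rfl⟩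
  have htm : t * (β ^ 2 - 1) = M := by rw [htdef]; field_simp
  have ht : β ^ 2 * t = t + M := by linarith
  have hJ : 1 < t + β * t := by
    have h1 : (t + β * t) * (β - 1) = M := by linarith
    by_contra hcon
    push Not at hcon
    nlinarith
  have hβt : 1 / 2 < β * t := by
    have : t < β * t := by
      have : 0 < t := by rw [htdef]; have : (0 : ℝ) < M := by exact_mod_cast hM
                         positivity
      nlinarith
    linarith
  obtain ⟨b, hbdef⟩ : ∃ b : ℝ, b = min t (1 / 2) := ⟨_, rfl⟩
  obtain ⟨a, hadef⟩ : ∃ a : ℝ, a = max (1 - β * t) ((β - M) / (2 * β)) := ⟨_, rfl⟩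
  have hbt : b ≤ t := hbdef ▸ min_le_left _ _
  have hb2 : b ≤ 1 / 2 := hbdef ▸ min_le_right _ _
  have hb : b = t ∨ b = 1 / 2 := hbdef ▸ min_choice _ _
  have ha1 : 1 - β * t ≤ a := hadef ▸ le_max_left _ _
  have ha2 : (β - M) / (2 * β) ≤ a := hadef ▸ le_max_right _ _
  have hM0 : (0 : ℝ) < M := by exact_mod_cast hM
  have hab : a < b := by
    rw [hadef, hbdef]
    refine max_lt (lt_min (by linarith) (by linarith)) (lt_min ?_ ?_)
    · rw [div_lt_iff₀ (by linarith)]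
      linarith
    · rw [div_lt_iff₀ (by linarith)]
      linarith
  set S : Set ℝ := {x : ℝ | x ∈ RepSet (-β) (digitSet M) ∧
        ∃ c : ℕ → ℝ, IsOptimalRep (-β) (digitSet M) c x} with hSdef
  have hγ : -β ≠ 0 := by linarith
  have hS : S ⊆ Set.Icc (-(β * t)) t := fun x hx => NegBase.rep_mem hβ ht hx.1
  have hLpos : 0 < β * (t + β * t) := by nlinarith
  have hcore := NegBase.core (c := (b - a) / (β * (t + β * t))) hβ hM ht hbt hab ha1 S hS
    (by
      rintro x ⟨hx, c, hc⟩ d hd hz h1 h2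
      have h0 := NegBase.digit_forced hβ hM hJ.le ht hb2 hb hc hd hz h1 h2
      have := NegBase.opt_tail hγ hc
      rw [h0] at this
      exact ⟨⟨_, this.1⟩, _, this⟩)
    (by
      rintro x ⟨hx, c, hc⟩ d hd hdM h1 h2
      exact NegBase.hole hβ hM hMβ hJ.le ht hbt hb2 hb ha1 ha2 hc hd hdM h1 h2)
    rfl (div_mul_cancel₀ _ hLpos.ne') (by rw [div_le_one hLpos]; nlinarith)
    (div_nonneg (by linarith) hLpos.le)
  have hcpos : 0 < (b - a) / (β * (t + β * t)) := div_pos (by linarith) hLpos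
  have hcle : (b - a) / (β * (t + β * t)) ≤ 1 := by rw [div_le_one hLpos]; nlinarith
  refine NegBase.null_of_fraction (θ := 1 - (b - a) / (β * (t + β * t))) (by linarith)
    (by linarith) hS fun p q h1 h2 h3 => ?_
  have hfin : MeasureTheory.volume (S ∩ Set.Ioo p q) ≠ ⊤ :=
    ne_top_of_le_ne_top ENNReal.ofReal_ne_top (hcore 0 p q h1 h2 h3)
  have h0 : 0 ≤ (1 - (b - a) / (β * (t + β * t))) * (q - p) :=
    mul_nonneg (by linarith) (by linarith)
  rw [ENNReal.le_ofReal_iff_toReal_le hfin h0]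
  refine NegBase.le_of_forall_pow (C := t + β * t) hβ fun n => ?_
  exact ENNReal.toReal_le_of_le_ofReal (add_nonneg h0 (by positivity)) (hcore n p q h1 h2 h3)
end

section
/- Let β ∈ (1,√3] ∪ (2,√5] with β ∉ ℤ, let A = {0,1,…,⌊β⌋}, and write {β} = β − ⌊β⌋. Then no x in the open interval I = (−1/(2β), −{β}/(2β²)) has an optimal (−β,A)-representation. -/
/-- Prepending a digit to a representation. -/
theorem IsRep.cons_digit {γ : ℝ} {B : Set ℝ} {b : ℕ → ℝ} {z d : ℝ} (hγ : γ ≠ 0)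
    (h : IsRep γ B b z) (hd : d ∈ B) :
    IsRep γ B (fun n => Nat.casesOn n d b) ((z + d) / γ) := by
  refine ⟨?_, ?_⟩
  · intro i
    cases i with
    | zero => exact hd
    | succ k => exact h.1 k
  · rw [← hasSum_nat_add_iff' 1]
    have h2 := h.2.div_const γ
    have e1 : (fun i : ℕ => b i / γ ^ (i + 1) / γ) = fun i : ℕ => b i / γ ^ (i + 1 + 1) := by
      funext i
      rw [pow_succ γ (i + 1), div_div]
    have e2 : z / γ = (z + d) / γ - ∑ i ∈ Finset.range 1,
        (fun n => Nat.casesOn n d b : ℕ → ℝ) i / γ ^ (i + 1) := by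
      simp
      field_simp
      ring
    rw [e1, e2] at h2
    exact h2

/-- Every point of the interval `[-Mβ/(β²-1), M/(β²-1)]` has a representation. -/
theorem exists_rep (β : ℝ) (M : ℤ) (hβ : 1 < β) (hM : β - 1 ≤ M)
    (z : ℝ) (hz : z ∈ Set.Icc (-(M * β / (β ^ 2 - 1))) (M / (β ^ 2 - 1))) :
    ∃ b, IsRep (-β) (digitSet M) b z := by
  have hq : 0 < β ^ 2 - 1 := by nlinarith
  obtain ⟨R, hR⟩ : ∃ R : ℝ, R = M / (β ^ 2 - 1) := ⟨_, rfl⟩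
  have hL : (M : ℝ) * β / (β ^ 2 - 1) = β * R := by rw [hR]; ring
  have hRM : R * (β ^ 2 - 1) = M := by rw [hR]; field_simp
  have hM0 : (0 : ℝ) ≤ M := by linarith
  have hR0 : 0 ≤ R := by rw [hR]; positivity
  have hlen : 1 ≤ β * R + R := by
    by_contra hcon
    push Not at hcon
    nlinarith
  rw [hL, ← hR] at hz
  have step : ∀ w : Set.Icc (-(β * R)) R, ∃ d : ℝ, d ∈ digitSet M ∧
      -β * w - d ∈ Set.Icc (-(β * R)) R := by
    rintro ⟨w, hw1, hw2⟩
    simp only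
    by_cases hc : -β * w ≤ R
    · refine ⟨0, ⟨0, ⟨le_refl _, by exact_mod_cast hM0⟩, by simp⟩, ?_, ?_⟩
      · nlinarith
      · linarith
    · push Not at hc
      refine ⟨(⌈-β * w - R⌉ : ℤ), ⟨⌈-β * w - R⌉, ⟨?_, ?_⟩, rfl⟩, ?_, ?_⟩
      · exact Int.ceil_nonneg (by linarith)
      · rw [Int.ceil_le]
        nlinarith
      · have := Int.ceil_lt_add_one (-β * w - R)
        linarith
      · have := Int.le_ceil (-β * w - R)
        linarith
  choose d hd1 hd2 using step
  let T : Set.Icc (-(β * R)) R → Set.Icc (-(β * R)) R := fun w => ⟨-β * w - d w, hd2 w⟩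
  let s : ℕ → Set.Icc (-(β * R)) R := fun n => T^[n] ⟨z, hz⟩
  have hs : ∀ n, ((s (n + 1) : Set.Icc (-(β * R)) R) : ℝ) = -β * s n - d (s n) := by
    intro n
    simp only [s, Function.iterate_succ_apply']
    rfl
  have hβ0 : (-β) ≠ 0 := by linarith
  have hpart : ∀ n, ∑ i ∈ Finset.range n, d (s i) / (-β) ^ (i + 1) =
      z - (s n : ℝ) * ((-β)⁻¹) ^ n := by
    intro n
    induction n with
    | zero => simp [s]
    | succ k ih =>
      rw [Finset.sum_range_succ, ih, hs, inv_pow, inv_pow, pow_succ]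
      field_simp
      ring
  have habs : |(-β)⁻¹| < 1 := by
    rw [abs_inv, abs_neg, abs_of_pos (by linarith)]
    exact inv_lt_one_of_one_lt₀ hβ
  refine ⟨fun n => d (s n), fun i => hd1 _, ?_⟩
  have hsum : Summable (fun i : ℕ => d (s i) / (-β) ^ (i + 1)) := by
    refine Summable.of_norm_bounded (g := fun i : ℕ => (M : ℝ) * |(-β)⁻¹| ^ (i + 1)) ?_ ?_
    · exact ((summable_nat_add_iff 1).2
        (summable_geometric_of_lt_one (abs_nonneg _) habs)).mul_left _
    · intro i
      obtain ⟨k, ⟨hk0, hk1⟩, hk⟩ := hd1 (s i)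
      rw [Real.norm_eq_abs, div_eq_mul_inv, ← inv_pow, abs_mul, abs_pow]
      refine mul_le_mul_of_nonneg_right ?_ (by positivity)
      rw [← hk]
      simp only
      have h0 : (0 : ℝ) ≤ k := by exact_mod_cast hk0
      rw [abs_of_nonneg h0]
      exact_mod_cast hk1
  rw [hsum.hasSum_iff_tendsto_nat]
  simp_rw [hpart]
  have hlim : Filter.Tendsto (fun n => (s n : ℝ) * ((-β)⁻¹) ^ n) Filter.atTop (nhds 0) := by
    refine squeeze_zero_norm (a := fun n => (β * R + R) * |(-β)⁻¹| ^ n) ?_ ?_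
    · intro n
      rw [Real.norm_eq_abs, abs_mul, abs_pow]
      refine mul_le_mul_of_nonneg_right ?_ (by positivity)
      have h1 := (s n).2.1
      have h2 := (s n).2.2
      rw [abs_le]
      constructor <;> nlinarith
    · simpa using (tendsto_pow_atTop_nhds_zero_of_lt_one (abs_nonneg _) habs).const_mul (β * R + R)
  simpa using hlim.const_sub z

/-- Case 1 of the proof of the main theorem: for `β ∈ (1,√3] ∪ (2,√5]`,
`β ∉ ℤ`, `A = {0,…,⌊β⌋}`, no `x ∈ (−1/(2β), −{β}/(2β²))` (where `{β} = β − ⌊β⌋`)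
has an optimal `(−β,A)`-representation. -/
theorem no_optimal_rep_on_interval_case1
    (β : ℝ) (hβ : β ∈ Set.Ioc (1 : ℝ) (Real.sqrt 3) ∪ Set.Ioc (2 : ℝ) (Real.sqrt 5))
    (hβZ : ∀ n : ℤ, β ≠ n) :
    ∀ x ∈ Set.Ioo (-1 / (2 * β)) (-(β - ⌊β⌋) / (2 * β ^ 2)),
      ¬ ∃ c : ℕ → ℝ, IsOptimalRep (-β) (digitSet ⌊β⌋) c x := by
  have hβ1 : 1 < β := by
    rcases hβ with h | h <;> linarith [h.1]
  have hM1 : (1 : ℤ) ≤ ⌊β⌋ := Int.le_floor.2 (by exact_mod_cast hβ1.le)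
  have hq : 0 < β ^ 2 - 1 := by nlinarith
  have hqM : β ^ 2 - 1 ≤ 2 * (⌊β⌋ : ℝ) := by
    rcases hβ with h | h
    · have h3 : β ^ 2 ≤ 3 := by
        rw [← Real.le_sqrt' (by linarith)]; exact h.2
      have : (1 : ℝ) ≤ ⌊β⌋ := by exact_mod_cast hM1
      linarith
    · have h3 : β ^ 2 ≤ 5 := by
        rw [← Real.le_sqrt' (by linarith)]; exact h.2
      have : (2 : ℤ) ≤ ⌊β⌋ := Int.le_floor.2 (by exact_mod_cast h.1.le)
      have : (2 : ℝ) ≤ ⌊β⌋ := by exact_mod_cast this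
      linarith
  have hf0 : (⌊β⌋ : ℝ) ≤ β := Int.floor_le β
  have hf1 : β < ⌊β⌋ + 1 := Int.lt_floor_add_one β
  rintro x ⟨hx1, hx2⟩ ⟨c, ⟨hcB, hcs⟩, hopt⟩
  have hrep := exists_rep β ⌊β⌋ hβ1 (by linarith)
  obtain ⟨m, hm⟩ : ∃ m : ℝ, m = (⌊β⌋ : ℝ) := ⟨_, rfl⟩
  have hR : (1 : ℝ) / 2 ≤ m / (β ^ 2 - 1) := by
    rw [hm, le_div_iff₀ hq]; linarith
  have hL : β / 2 ≤ m * β / (β ^ 2 - 1) := by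
    rw [hm, le_div_iff₀ hq]; nlinarith
  have hm1 : 1 ≤ m := by rw [hm]; exact_mod_cast hM1
  rw [← hm] at hrep hx2 hf0 hf1
  obtain ⟨y, hy⟩ : ∃ y : ℝ, y = -β * x := ⟨_, rfl⟩
  have hβ0 : β ≠ 0 := by linarith
  have hβpos : 0 < β := by linarith
  have hxy : x = y / (-β) := by rw [hy]; field_simp
  have hy1 : y < 1 / 2 := by
    rw [div_lt_iff₀ (by linarith)] at hx1; nlinarith
  have hy2 : β - m < 2 * β * y := by
    rw [lt_div_iff₀ (by positivity)] at hx2; rw [hy]; nlinarith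
  have hy0 : 0 < y := by
    by_contra hcon
    push Not at hcon
    nlinarith
  -- the two competing representations
  obtain ⟨b, hb⟩ := hrep y ⟨by nlinarith, by linarith⟩
  obtain ⟨e, he⟩ := hrep (β - m - β * y) ⟨by nlinarith, by linarith⟩
  have h0mem : (0 : ℝ) ∈ digitSet ⌊β⌋ := ⟨0, ⟨le_refl _, by omega⟩, by simp⟩
  have h1mem : (1 : ℝ) ∈ digitSet ⌊β⌋ := ⟨1, ⟨by omega, hM1⟩, by simp⟩
  have hmmem : m ∈ digitSet ⌊β⌋ := ⟨⌊β⌋, ⟨by omega, le_refl _⟩, by simp [hm]⟩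
  have hnβ : -β ≠ 0 := by linarith
  have hb1 := hb.cons_digit hnβ h0mem
  have he1 := (he.cons_digit hnβ hmmem).cons_digit hnβ h1mem
  have e1 : (y + 0) / (-β) = x := by rw [hxy]; simp
  have e2 : ((β - m - β * y + m) / (-β) + 1) / (-β) = x := by
    rw [hxy]; field_simp; ring
  rw [e1] at hb1
  rw [e2] at he1
  have k1 := hopt _ hb1 1 le_rfl
  have k2 := hopt _ he1 2 (by norm_num)
  simp only [Finset.sum_range_succ, Finset.sum_range_zero, zero_add, pow_one] at k1 k2
  change |x - c 0 / (-β)| ≤ |x - 0 / (-β)| at k1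
  change |x - (c 0 / (-β) + c 1 / (-β) ^ (1 + 1))| ≤
    |x - (1 / (-β) + m / (-β) ^ (1 + 1))| at k2
  obtain ⟨p, ⟨hp0, -⟩, hp⟩ := hcB 0
  obtain ⟨q, ⟨hq0, -⟩, hq'⟩ := hcB 1
  simp only at hp hq'
  have hc0 : c 0 = 0 := by
    have t1 : x - c 0 / (-β) = (y - c 0) / (-β) := by rw [hxy]; ring
    have t2 : x - 0 / (-β) = y / (-β) := by rw [hxy]; ring
    rw [t1, t2, abs_div, abs_div,
      div_le_div_iff_of_pos_right (abs_pos.2 hnβ), abs_of_pos hy0] at k1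
    have hlt : c 0 < 1 := by linarith [(abs_le.1 k1).1]
    rw [← hp] at hlt ⊢
    have : p < 1 := by exact_mod_cast hlt
    have : p = 0 := by omega
    simp [this]
  have hc1 : 0 ≤ c 1 := by rw [← hq']; exact_mod_cast hq0
  have t1 : x - (c 0 / (-β) + c 1 / (-β) ^ (1 + 1)) = (-(β * y + c 1)) / β ^ 2 := by
    rw [hxy, hc0]; field_simp; ring
  have t2 : x - (1 / (-β) + m / (-β) ^ (1 + 1)) = (β - m - β * y) / β ^ 2 := by
    rw [hxy]; field_simp; ring
  have hby : 0 < β * y := by positivity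
  rw [t1, t2, abs_div, abs_div, div_le_div_iff_of_pos_right (by positivity), abs_neg,
    abs_of_pos (by linarith)] at k2
  have : |β - m - β * y| < β * y + c 1 ∨ β - m - β * y = -(β * y) := by
    by_cases h : β - m = 0
    · right; linarith
    · left
      have : 0 < β - m := lt_of_le_of_ne (by linarith) (Ne.symm h)
      rw [abs_lt]; constructor <;> linarith
  rcases this with h | h
  · linarith
  · exact hβZ ⌊β⌋ (by rw [← hm]; linarith)
end

section
/- Let β > 1 with β ∉ ℕ, let A = {0,1,…,⌊β⌋}, r = ⌊β⌋/(β²−1), and {β} = β − ⌊β⌋. Assume {β}/2 < r < 1/2. Then no x in the open interval I = (−r/β, −{β}/(2β²)) has an optimal (−β,A)-representation. -/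
theorem rep_cons (γ : ℝ) (B : Set ℝ) (b : ℕ → ℝ) (y d : ℝ) (hd : d ∈ B)
    (h : IsRep γ B b y) :
    IsRep γ B (fun n => Nat.casesOn n d b) ((d + y) / γ) := by
  refine ⟨fun i => ?_, ?_⟩
  · cases i with
    | zero => exact hd
    | succ k => exact h.1 k
  · rw [← hasSum_nat_add_iff' 1]
    have h2 := h.2.div_const γ
    have e1 : (d + y) / γ - ∑ i ∈ Finset.range 1,
        (Nat.casesOn i d b : ℝ) / γ ^ (i + 1) = y / γ := by
      simp
      ring
    have e2 : (fun i : ℕ => b i / γ ^ (i + 1) / γ) =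
        fun i : ℕ => b i / γ ^ (i + 1 + 1) := by
      funext i
      rw [pow_succ γ (i + 1), div_div]
    rw [e2] at h2
    rw [e1]
    exact h2

theorem digit_exists_s10 (β r y : ℝ) (M : ℤ) (hβ : 1 < β) (hM0 : 0 ≤ M)
    (hr0 : β ^ 2 * r = r + M) (hlen : 1 ≤ r * (β + 1))
    (hy : y ∈ Set.Icc (-(β * r)) r) :
    ∃ d : ℝ, d ∈ digitSet M ∧ -β * y - d ∈ Set.Icc (-(β * r)) r := by
  obtain ⟨h1, h2⟩ := hy
  by_cases hw : -β * y ≤ r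
  · refine ⟨0, ⟨0, ⟨le_refl _, hM0⟩, by simp⟩, ?_, ?_⟩
    · nlinarith
    · linarith
  · push Not at hw
    refine ⟨(⌈-β * y - r⌉ : ℤ), ⟨⌈-β * y - r⌉, ⟨?_, ?_⟩, rfl⟩, ?_, ?_⟩
    · exact Int.ceil_nonneg (by linarith)
    · rw [Int.ceil_le]
      nlinarith
    · have := Int.ceil_lt_add_one (-β * y - r)
      linarith
    · have := Int.le_ceil (-β * y - r)
      linarith

theorem rep_exists (β r y : ℝ) (M : ℤ) (hβ : 1 < β) (hM0 : 0 ≤ M)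
    (hr0 : β ^ 2 * r = r + M) (hlen : 1 ≤ r * (β + 1))
    (hy : y ∈ Set.Icc (-(β * r)) r) :
    ∃ b, IsRep (-β) (digitSet M) b y := by
  have H : ∀ z : Set.Icc (-(β * r)) r, ∃ d : ℝ, d ∈ digitSet M ∧
      -β * z - d ∈ Set.Icc (-(β * r)) r := fun z =>
    digit_exists_s10 β r z M hβ hM0 hr0 hlen z.2
  choose D hD1 hD2 using H
  let T : Set.Icc (-(β * r)) r → Set.Icc (-(β * r)) r := fun z => ⟨_, hD2 z⟩
  let Y : ℕ → Set.Icc (-(β * r)) r := fun n => T^[n] ⟨y, hy⟩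
  have hY0 : (Y 0 : ℝ) = y := rfl
  have hYs : ∀ n, (Y (n + 1) : ℝ) = -β * Y n - D (Y n) := by
    intro n
    simp only [Y, Function.iterate_succ_apply', T]
  have hβ0 : (-β) ≠ 0 := by linarith
  have hpart : ∀ n, ∑ i ∈ Finset.range n, D (Y i) / (-β) ^ (i + 1) = y - Y n / (-β) ^ n := by
    intro n
    induction n with
    | zero => simp [hY0]
    | succ k ih =>
      rw [Finset.sum_range_succ, ih, hYs k]
      have : (-β) ^ k ≠ 0 := pow_ne_zero _ hβ0
      rw [pow_succ]
      generalize (-β) ^ k = p at *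
      field_simp
      ring
  have hgeo : Summable (fun i : ℕ => (M : ℝ) * (β⁻¹) ^ i) :=
    (summable_geometric_of_lt_one (by positivity) (inv_lt_one_of_one_lt₀ hβ)).mul_left _
  have hsum : Summable (fun i : ℕ => D (Y i) / (-β) ^ (i + 1)) := by
    refine Summable.of_norm_bounded ((summable_nat_add_iff 1).2 hgeo) (fun i => ?_)
    obtain ⟨k, ⟨hk0, hk1⟩, hk⟩ := hD1 (Y i)
    have hk0' : (0 : ℝ) ≤ k := by exact_mod_cast hk0
    have hk1' : (k : ℝ) ≤ M := by exact_mod_cast hk1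
    rw [← hk, norm_div, norm_pow, norm_neg, Real.norm_of_nonneg (by linarith : 0 ≤ β),
      Real.norm_of_nonneg hk0', inv_pow, div_eq_mul_inv]
    gcongr
  refine ⟨fun i => D (Y i), fun i => hD1 _, ?_⟩
  rw [hsum.hasSum_iff_tendsto_nat]
  simp only [hpart]
  have hz : Filter.Tendsto (fun n => (Y n : ℝ) / (-β) ^ n) Filter.atTop (nhds 0) := by
    have hg : Filter.Tendsto (fun n : ℕ => (β * |r| + |r|) * (β⁻¹) ^ n) Filter.atTop (nhds 0) := by
      have := (tendsto_pow_atTop_nhds_zero_of_lt_one (by positivity)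
        (inv_lt_one_of_one_lt₀ hβ)).const_mul (β * |r| + |r|)
      simpa using this
    refine squeeze_zero_norm (fun n => ?_) hg
    obtain ⟨h1, h2⟩ := (Y n).2
    rw [norm_div, norm_pow, norm_neg, Real.norm_of_nonneg (by linarith : 0 ≤ β), inv_pow,
      div_eq_mul_inv]
    gcongr
    rw [Real.norm_eq_abs, abs_le]
    have := le_abs_self r
    have := abs_nonneg r
    constructor <;> nlinarith
  simpa using hz.const_sub y

/-- Case 2 of the proof of the main theorem: for `β > 1`, `β ∉ ℕ`,
`A = {0,…,⌊β⌋}`, `r = ⌊β⌋/(β²−1)`, `{β} = β − ⌊β⌋`, if `{β}/2 < r < 1/2`, then no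
`x ∈ (−r/β, −{β}/(2β²))` has an optimal `(−β,A)`-representation. -/
theorem no_optimal_rep_on_interval_case2
    (β : ℝ) (hβ : 1 < β) (hβN : ∀ n : ℕ, β ≠ n)
    (r : ℝ) (hr : r = (⌊β⌋ : ℝ) / (β ^ 2 - 1))
    (hr1 : (β - ⌊β⌋) / 2 < r) (hr2 : r < 1 / 2) :
    ∀ x ∈ Set.Ioo (-r / β) (-(β - ⌊β⌋) / (2 * β ^ 2)),
      ¬ ∃ c : ℕ → ℝ, IsOptimalRep (-β) (digitSet ⌊β⌋) c x := by
  rintro x ⟨hx1, hx2⟩ ⟨c, ⟨hc, -⟩, hopt⟩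
  have hf0 := Int.floor_le β
  have hf1 := Int.lt_floor_add_one β
  have hM1 : (1 : ℤ) ≤ ⌊β⌋ := Int.le_floor.2 (by simpa using hβ.le)
  have hM1' : (1 : ℝ) ≤ (⌊β⌋ : ℝ) := by exact_mod_cast hM1
  generalize ⌊β⌋ = M at *
  have hfpos : (M : ℝ) < β := by
    refine lt_of_le_of_ne hf0 (fun h => hβN M.toNat ?_)
    have h5 : ((M.toNat : ℤ) : ℝ) = (M : ℝ) := by rw [Int.toNat_of_nonneg (by omega)]
    rw [← h, ← h5]
    exact Int.cast_natCast _
  have hb2 : 0 < β ^ 2 - 1 := by nlinarith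
  have hr0 : β ^ 2 * r = r + M := by
    rw [eq_div_iff hb2.ne'] at hr
    linarith
  have hlen : 1 ≤ r * (β + 1) := by
    have : r * (β + 1) * (β - 1) = M := by nlinarith
    by_contra h
    push Not at h
    nlinarith
  have hrpos : 0 < r := by linarith
  have hβ0 : 0 < β := by linarith
  rw [div_lt_iff₀ hβ0] at hx1
  rw [lt_div_iff₀ (by positivity)] at hx2
  have hxneg : x < 0 := by
    by_contra h
    push Not at h
    have : 0 ≤ x * (2 * β ^ 2) := by positivity
    linarith
  have hM0 : (0 : ℤ) ≤ M := by linarith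
  have d0 : (0 : ℝ) ∈ digitSet M := ⟨0, ⟨le_refl _, hM0⟩, by simp⟩
  have d1 : (1 : ℝ) ∈ digitSet M := ⟨1, ⟨by norm_num, hM1⟩, by simp⟩
  have dM : (M : ℝ) ∈ digitSet M := ⟨M, ⟨hM0, le_refl _⟩, rfl⟩
  have hxb : x * β < 0 := mul_neg_of_neg_of_pos hxneg hβ0
  -- first competitor: leading digit 0
  obtain ⟨b, hb⟩ := rep_exists β r (-β * x) M hβ hM0 hr0 hlen ⟨by nlinarith, by linarith⟩
  have hb' := rep_cons _ _ _ _ _ d0 hb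
  rw [show (0 + -β * x) / -β = x by field_simp; ring] at hb'
  have h1 := hopt _ hb' 1 le_rfl
  obtain ⟨k0, ⟨hk0, -⟩, hk0e⟩ := hc 0
  obtain ⟨k1, ⟨hk1, -⟩, hk1e⟩ := hc 1
  simp only at hk0e hk1e
  simp [← hk0e] at h1
  have hk : k0 = 0 := by
    by_contra hne
    have h1k : (1 : ℤ) ≤ k0 := by omega
    have h1k' : (1 : ℝ) ≤ k0 := by exact_mod_cast h1k
    rw [abs_of_neg hxneg, abs_le, div_neg] at h1
    have h3 : x + k0 / β ≤ -x := by linarith [h1.2]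
    have h4 : k0 / β ≤ -2 * x := by linarith
    rw [div_le_iff₀ hβ0] at h4
    nlinarith
  subst hk
  -- second competitor: leading digits 1, M
  obtain ⟨b2, hb2'⟩ := rep_exists β r (β ^ 2 * x + (β - M)) M hβ hM0 hr0 hlen
    ⟨by nlinarith, by nlinarith⟩
  have hb3 := rep_cons _ _ _ _ _ d1 (rep_cons _ _ _ _ _ dM hb2')
  rw [show (1 + (M + (β ^ 2 * x + (β - M))) / -β) / -β = x by field_simp; ring] at hb3
  have h2 := hopt _ hb3 2 (by norm_num)
  simp [Finset.sum_range_succ, ← hk0e, ← hk1e] at h2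
  have hk1' : (0 : ℝ) ≤ k1 := by exact_mod_cast hk1
  have hq : 0 < β ^ 2 := by positivity
  have e1 : x - k1 / β ^ 2 = (β ^ 2 * x - k1) / β ^ 2 := by field_simp
  have e2 : x - (1 / -β + M / β ^ 2) = (β ^ 2 * x + (β - M)) / β ^ 2 := by
    field_simp; ring
  simp only [one_div, inv_neg] at e2
  rw [e1, e2, abs_div, abs_div, abs_of_pos hq, div_le_div_iff_of_pos_right hq] at h2
  have hneg : β ^ 2 * x < 0 := by nlinarith
  rw [abs_of_neg (by linarith)] at h2
  have : |β ^ 2 * x + (β - M)| < -(β ^ 2 * x - k1) := by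
    rw [abs_lt]
    constructor <;> nlinarith
  linarith
end

section
/- Let β > 1 with β ∉ ℕ, let A = {0,1,…,⌊β⌋}, r = ⌊β⌋/(β²−1), and {β} = β − ⌊β⌋. Assume r ≤ {β}/2. Then no x in the open interval I = (−r/β, r/β² − {β}/β²) has an optimal (−β,A)-representation. -/
theorem aux_cons (γ : ℝ) (hγ : γ ≠ 0) (B : Set ℝ) (b : ℕ → ℝ) (w d : ℝ) (hd : d ∈ B)
    (hb : IsRep γ B b w) :
    IsRep γ B (fun n => Nat.casesOn n d b) ((d + w) / γ) := by
  refine ⟨?_, ?_⟩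
  · intro i
    cases i with
    | zero => exact hd
    | succ k => exact hb.1 k
  · have h2 := hb.2.div_const γ
    rw [← hasSum_nat_add_iff' 1]
    have e : (d + w) / γ - ∑ i ∈ Finset.range 1,
        (Nat.casesOn i d b : ℝ) / γ ^ (i + 1) = w / γ := by
      rw [Finset.sum_range_one]
      change (d + w) / γ - d / γ ^ (0 + 1) = w / γ
      field_simp
      ring
    rw [e]
    have e2 : (fun i : ℕ => (Nat.casesOn (i + 1) d b : ℝ) / γ ^ (i + 1 + 1)) =
        fun i => b i / γ ^ (i + 1) / γ := by
      funext i
      change b i / γ ^ (i + 1 + 1) = _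
      rw [pow_succ γ (i + 1), div_div]
    exact e2 ▸ h2

theorem aux_exists (β : ℝ) (hβ : 1 < β) (M : ℤ) (r : ℝ) (hr0 : 0 ≤ r)
    (hrM : r * β ^ 2 = r + M) (hr1 : 1 ≤ r * (β + 1)) (hM : 0 ≤ M)
    (w : ℝ) (h1 : -(r * β) ≤ w) (h2 : w ≤ r) : ∃ b, IsRep (-β) (digitSet M) b w := by
  have step : ∀ w : Set.Icc (-(r * β)) r, ∃ d : ℝ, d ∈ digitSet M ∧
      -β * w - d ∈ Set.Icc (-(r * β)) r := by
    rintro ⟨w, hw1, hw2⟩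
    have hv1 : -(r * β) ≤ -β * w := by nlinarith
    have hv2 : -β * w ≤ r + M := by nlinarith
    refine ⟨((max 0 ⌈-β * w - r⌉ : ℤ) : ℝ), ⟨_, ⟨le_max_left _ _, ?_⟩, rfl⟩, ?_⟩
    · apply max_le hM
      rw [Int.ceil_le]
      linarith
    · have hc := Int.le_ceil (-β * w - r)
      have hc' := Int.ceil_lt_add_one (-β * w - r)
      rcases le_total 0 ⌈-β * w - r⌉ with h | h
      · rw [max_eq_right h]
        constructor <;> simp only <;> linarith
      · rw [max_eq_left h]
        have : ((⌈-β * w - r⌉ : ℤ) : ℝ) ≤ 0 := by exact_mod_cast h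
        constructor <;> push_cast <;> linarith
  choose d hd hd2 using step
  let s : ℕ → Set.Icc (-(r * β)) r := fun n =>
    Nat.rec (motive := fun _ => Set.Icc (-(r * β)) r) ⟨w, h1, h2⟩
      (fun _ v => ⟨-β * v - d v, hd2 v⟩) n
  have hs0 : ((s 0 : Set.Icc (-(r * β)) r) : ℝ) = w := rfl
  have hs : ∀ n, ((s (n + 1) : Set.Icc (-(r * β)) r) : ℝ) = -β * s n - d (s n) := fun n => rfl
  have hβ0 : β ≠ 0 := by linarith
  refine ⟨fun n => d (s n), fun i => hd _, ?_⟩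
  have hpart : ∀ n, ∑ i ∈ Finset.range n, d (s i) / (-β) ^ (i + 1) = w - s n / (-β) ^ n := by
    intro n
    induction n with
    | zero => simp [hs0]
    | succ k ih =>
      rw [Finset.sum_range_succ, ih, hs]
      have : (-β) ^ k ≠ 0 := pow_ne_zero _ (neg_ne_zero.2 hβ0)
      rw [pow_succ]
      field_simp
      ring
  have hgeo : Summable (fun i : ℕ => (M : ℝ) * (β⁻¹) ^ (i + 1)) := by
    apply Summable.mul_left
    exact (summable_nat_add_iff 1).2
      (summable_geometric_of_lt_one (by positivity) (inv_lt_one_of_one_lt₀ hβ))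
  have hsum : Summable (fun i : ℕ => d (s i) / (-β) ^ (i + 1)) := by
    refine Summable.of_norm_bounded hgeo ?_
    intro i
    obtain ⟨k, ⟨hk0, hkM⟩, hk⟩ := hd (s i)
    have hk0' : (0 : ℝ) ≤ k := by exact_mod_cast hk0
    have hkM' : (k : ℝ) ≤ M := by exact_mod_cast hkM
    simp only at hk
    rw [← hk, norm_div, norm_pow, norm_neg, Real.norm_of_nonneg hk0',
      Real.norm_of_nonneg (by linarith : (0 : ℝ) ≤ β), div_eq_mul_inv, inv_pow]
    gcongr
  rw [hsum.hasSum_iff_tendsto_nat]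
  simp only [hpart]
  have hz : Filter.Tendsto (fun n : ℕ => (s n : ℝ) / (-β) ^ n) Filter.atTop (nhds 0) := by
    have hg : Filter.Tendsto (fun n : ℕ => (r * β + r) * (β⁻¹) ^ n) Filter.atTop (nhds 0) := by
      have := (tendsto_pow_atTop_nhds_zero_of_lt_one (by positivity : (0 : ℝ) ≤ β⁻¹)
        (inv_lt_one_of_one_lt₀ hβ)).const_mul (r * β + r)
      simpa using this
    refine squeeze_zero_norm ?_ hg
    intro n
    obtain ⟨q1, q2⟩ := (s n).2
    have hrb : 0 ≤ r * β := by positivity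
    rw [norm_div, norm_pow, norm_neg,
      Real.norm_of_nonneg (by linarith : (0 : ℝ) ≤ β), div_eq_mul_inv, inv_pow]
    gcongr
    rw [Real.norm_eq_abs, abs_le]
    constructor <;> linarith
  simpa using hz.const_sub w

/-- Case 3 of the proof of the main theorem: for `β > 1`, `β ∉ ℕ`,
`A = {0,…,⌊β⌋}`, `r = ⌊β⌋/(β²−1)`, `{β} = β − ⌊β⌋`, if `r ≤ {β}/2`, then no
`x ∈ (−r/β, r/β² − {β}/β²)` has an optimal `(−β,A)`-representation. -/
theorem no_optimal_rep_on_interval_case3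
    (β : ℝ) (hβ : 1 < β) (hβN : ∀ n : ℕ, β ≠ n)
    (r : ℝ) (hr : r = (⌊β⌋ : ℝ) / (β ^ 2 - 1))
    (hr1 : r ≤ (β - ⌊β⌋) / 2) :
    ∀ x ∈ Set.Ioo (-r / β) (r / β ^ 2 - (β - ⌊β⌋) / β ^ 2),
      ¬ ∃ c : ℕ → ℝ, IsOptimalRep (-β) (digitSet ⌊β⌋) c x := by
  rintro x ⟨hx1, hx2⟩ ⟨c, hc, hopt⟩
  have hM1 : 1 ≤ ⌊β⌋ := by rw [Int.le_floor]; push_cast; exact hβ.le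
  have hMβ := Int.floor_le β
  have hMβ' := Int.lt_floor_add_one β
  have hM1' : (1 : ℝ) ≤ (⌊β⌋ : ℝ) := by exact_mod_cast hM1
  generalize hMdef : ⌊β⌋ = M at *
  have hq : 0 < β ^ 2 - 1 := by nlinarith
  have hrpos : 0 < r := by rw [hr]; positivity
  have hrM : r * β ^ 2 = r + M := by
    rw [hr]; field_simp; ring
  have hr2 : 1 ≤ r * (β + 1) := by
    by_contra hcon
    push Not at hcon
    nlinarith
  have hβ0 : 0 < β := by linarith
  have hx1' : -(β * x) < r := by
    rw [div_lt_iff₀ hβ0] at hx1; linarith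
  have hx2' : β ^ 2 * x < r - (β - M) := by
    rw [← sub_div, lt_div_iff₀ (by positivity)] at hx2; linarith
  have hz1 : -(r * β) ≤ β ^ 2 * x := by nlinarith
  obtain ⟨b, hb⟩ := aux_exists β hβ M r hrpos.le hrM hr2 (by linarith) (β ^ 2 * x) hz1 (by linarith)
  obtain ⟨b', hb'⟩ := aux_exists β hβ M r hrpos.le hrM hr2 (by linarith) (β ^ 2 * x + (β - M))
    (by linarith) (by linarith)
  have hγ : -β ≠ 0 := by linarith
  have d0 : (0 : ℝ) ∈ digitSet M := ⟨0, ⟨le_rfl, by linarith⟩, by simp⟩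
  have d1 : (1 : ℝ) ∈ digitSet M := ⟨1, ⟨by norm_num, hM1⟩, by simp⟩
  have dM : (M : ℝ) ∈ digitSet M := ⟨M, ⟨by linarith, le_rfl⟩, rfl⟩
  have e1 := aux_cons _ hγ _ _ _ _ d0 (aux_cons _ hγ _ _ _ _ d0 hb)
  have e2 := aux_cons _ hγ _ _ _ _ d1 (aux_cons _ hγ _ _ _ _ dM hb')
  have q1 : (0 + (0 + β ^ 2 * x) / -β) / -β = x := by field_simp; ring
  have q2 : (1 + (M + (β ^ 2 * x + (β - M))) / -β) / -β = x := by field_simp; ring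
  rw [q1] at e1
  rw [q2] at e2
  have o1 := hopt _ e1 1 le_rfl
  have o2 := hopt _ e2 2 (by norm_num)
  obtain ⟨k0, ⟨hk0, -⟩, hck0⟩ := hc.1 0
  obtain ⟨k1, ⟨hk1, -⟩, hck1⟩ := hc.1 1
  simp only at hck0 hck1
  have hk1' : (0 : ℝ) ≤ k1 := by exact_mod_cast hk1
  simp only [Finset.sum_range_succ, Finset.sum_range_zero, ← hck0, ← hck1] at o1 o2
  have hxneg : x < 0 := by
    by_contra hcon
    push Not at hcon
    have : 0 ≤ β ^ 2 * x := by positivity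
    linarith
  have hk00 : k0 = 0 := by
    by_contra hne
    have : (1 : ℝ) ≤ k0 := by
      have : 1 ≤ k0 := by omega
      exact_mod_cast this
    have a1 : x - (0 + (k0 : ℝ) / (-β) ^ (0 + 1)) = (β * x + k0) / β := by
      field_simp; ring
    rw [a1, abs_div, abs_of_pos hβ0, div_le_iff₀ hβ0] at o1
    have a2 : |x - (0 + (0 : ℝ) / (-β) ^ (0 + 1))| * β = -(β * x) := by
      rw [zero_div, add_zero, sub_zero, abs_of_neg hxneg]; ring
    have o1' : |β * x + k0| ≤ -(β * x) := by rw [← a2]; exact o1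
    have := le_abs_self (β * x + k0)
    linarith
  subst hk00
  have o2' : |x - k1 / β ^ 2| ≤ |(β ^ 2 * x + (β - M)) / β ^ 2| := by
    change _ ≤ |x - (0 + 1 / (-β) ^ (0 + 1) + (M : ℝ) / (-β) ^ (1 + 1))| at o2
    convert o2 using 2
    · simp
    · field_simp
      ring
  have a3 : x - k1 / β ^ 2 = (β ^ 2 * x - k1) / β ^ 2 := by field_simp
  rw [a3, abs_div, abs_div, div_le_div_iff_of_pos_right (by positivity)] at o2'
  have hl := neg_le_abs (β ^ 2 * x - k1)
  have hfr : 0 < β - M := by linarith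
  have hr3 : |β ^ 2 * x + (β - M)| < -(β ^ 2 * x) := by
    rw [abs_lt]; constructor <;> linarith
  linarith
end

section
/- Let β ∈ (1,√3] ∪ (2,√5] with β ∉ ℤ, let l = −β⌊β⌋/(β²−1), r = ⌊β⌋/(β²−1), and {β} = β − ⌊β⌋. Then for every x in the open interval (−1/(2β), −{β}/(2β²)) one has both |x| > |x + {β}/β²| and x + {β}/β² ∈ [l/β², r/β²]. (Note x + {β}/β² = x − (1/(−β) + ⌊β⌋/(−β)²), so this exhibits a (−β,A)-representation of x beginning with digits 1, ⌊β⌋ whose second partial sum approximates x strictly better than 0.) -/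
/-- for `β ∈ (1,√3] ∪ (2,√5]`, `β ∉ ℤ`, `l = −β⌊β⌋/(β²−1)`,
`r = ⌊β⌋/(β²−1)`, `{β} = β − ⌊β⌋`: every `x ∈ (−1/(2β), −{β}/(2β²))` satisfies both
`|x| > |x + {β}/β²|` and `x + {β}/β² ∈ [l/β², r/β²]`. -/
theorem better_competitor_exists_case1
    (β : ℝ) (hβ : β ∈ Set.Ioc (1 : ℝ) (Real.sqrt 3) ∪ Set.Ioc (2 : ℝ) (Real.sqrt 5))
    (hβZ : ∀ n : ℤ, β ≠ n)
    (l r : ℝ) (hl : l = -β * ⌊β⌋ / (β ^ 2 - 1)) (hr : r = (⌊β⌋ : ℝ) / (β ^ 2 - 1)) :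
    ∀ x ∈ Set.Ioo (-1 / (2 * β)) (-(β - ⌊β⌋) / (2 * β ^ 2)),
      |x + (β - ⌊β⌋) / β ^ 2| < |x| ∧
      x + (β - ⌊β⌋) / β ^ 2 ∈ Set.Icc (l / β ^ 2) (r / β ^ 2) := by
  have key : ∃ n : ℝ, (⌊β⌋ : ℝ) = n ∧ 1 < β ∧ 0 < β - n ∧ β - n < 1 ∧ 0 < n ∧ β ^ 2 - 1 ≤ 2 * n ∧
      0 ≤ (β / 2 - n) * (β ^ 2 - 1) + β * n := by
    rcases hβ with ⟨h1, h2⟩ | ⟨h1, h2⟩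
    · have hsq : β ^ 2 ≤ 3 := (Real.le_sqrt' (by linarith)).1 h2
      have hf : ⌊β⌋ = 1 := by
        rw [Int.floor_eq_iff]
        push_cast
        constructor <;> nlinarith
      refine ⟨1, by rw [hf]; norm_num, h1, by linarith, by nlinarith, by norm_num, by linarith, ?_⟩
      have : 0 ≤ β * (β - 1) ^ 2 := by positivity
      nlinarith
    · have hsq : β ^ 2 ≤ 5 := (Real.le_sqrt' (by linarith)).1 h2
      have hf : ⌊β⌋ = 2 := by
        rw [Int.floor_eq_iff]
        push_cast
        constructor <;> nlinarith
      refine ⟨2, by rw [hf]; norm_num, by linarith, by linarith, by nlinarith, by norm_num,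
        by linarith, ?_⟩
      have h3 : 0 ≤ (β ^ 2 - β) * (β - 2) := mul_nonneg (by nlinarith) (by linarith)
      nlinarith
  obtain ⟨n, hn, h1, hf0, hf1, hn0, hup, hlow⟩ := key
  subst hl hr
  rw [hn]
  rintro x ⟨hx1, hx2⟩
  have hβ0 : 0 < β := by linarith
  have hb2 : 0 < β ^ 2 := by positivity
  have hb1 : 0 < β ^ 2 - 1 := by nlinarith
  have hpos : 0 < (β - n) / β ^ 2 := by positivity
  have e1 : -(β - n) / (2 * β ^ 2) = -((β - n) / β ^ 2) / 2 := by field_simp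
  have e2 : -1 / (2 * β) = (-β / 2) / β ^ 2 := by field_simp
  rw [e1] at hx2
  rw [e2] at hx1
  refine ⟨?_, ?_, ?_⟩
  · rw [abs_of_neg (show x < 0 by linarith), abs_lt]
    constructor <;> linarith
  · have h : -β * n / (β ^ 2 - 1) ≤ -β / 2 + (β - n) := by
      rw [div_le_iff₀ hb1]
      nlinarith
    have := div_le_div_of_nonneg_right h hb2.le
    rw [add_div] at this
    linarith
  · have h : (β - n) / 2 ≤ n / (β ^ 2 - 1) := by
      rw [le_div_iff₀ hb1]
      nlinarith
    have := div_le_div_of_nonneg_right h hb2.le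
    have e3 : (β - n) / 2 / β ^ 2 = (β - n) / β ^ 2 / 2 := by ring
    linarith
end

section
/- Let β > 1 be a confluent Pisot number, i.e., suppose there exist integers d ≥ 1, m ≥ 1, p with 0 ≤ p < m such that β^{d+1} = m β^d + m β^{d−1} + ⋯ + m β + p + 1 (so m = ⌊β⌋). Let k ≥ 1 and let y = Σ_{j=1}^k y_j/β^j with all y_j ∈ {0,1,…,m}, and suppose y ∈ [0,1). Then the greedy (Rényi) digits (x_j)_{j≥1} of y satisfy x_j = 0 for all j > k. -/
/-- The Rényi (greedy) transformation `T(z) = βz − ⌊βz⌋`. -/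
noncomputable def renyiT (β : ℝ) (z : ℝ) : ℝ := β * z - ⌊β * z⌋

/-- The `j`-th greedy digit of `y` in base `β` (0-indexed: `greedyDigit β y j = x_{j+1}`). -/
noncomputable def greedyDigit (β : ℝ) (y : ℝ) (j : ℕ) : ℤ := ⌊β * (renyiT β)^[j] y⌋

/-- `wordVal β m n v`: `v` is the value of a length `n` word on digits `0..m`. -/
def wordVal (β : ℝ) (m : ℤ) : ℕ → ℝ → Prop
  | 0, v => v = 0
  | n + 1, v => ∃ w : ℤ, 0 ≤ w ∧ w ≤ m ∧ ∃ t : ℝ, wordVal β m n t ∧ v = (w + t) / β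

/-- The orbit of `1`, indexed backwards. -/
noncomputable def backOrb (β : ℝ) (m p : ℤ) : ℕ → ℝ
  | 0 => (p + 1) / β
  | j + 1 => (m + backOrb β m p j) / β

lemma backOrb_pos (β : ℝ) (hβ : 1 < β) (m p : ℤ) (hm : 1 ≤ m) (hp : 0 ≤ p) (j : ℕ) :
    0 < backOrb β m p j := by
  have hm' : (1 : ℝ) ≤ m := by exact_mod_cast hm
  have hp' : (0 : ℝ) ≤ p := by exact_mod_cast hp
  induction j with
  | zero => simp only [backOrb]; positivity
  | succ j ih => simp only [backOrb]; positivity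

lemma backOrb_eq (β : ℝ) (hβ : 1 < β) (m p : ℤ) (j : ℕ) :
    β ^ (j + 1) * backOrb β m p j = m * ∑ i ∈ Finset.range j, β ^ (i + 1) + p + 1 := by
  have h0 : β ≠ 0 := by positivity
  induction j with
  | zero => simp only [backOrb]; field_simp; simp
  | succ j ih =>
    have : β ^ (j + 1 + 1) * backOrb β m p (j + 1)
        = β ^ (j + 1) * m + β ^ (j + 1) * backOrb β m p j := by
      simp only [backOrb]; field_simp; ring
    rw [this, ih, Finset.sum_range_succ]; ring

lemma wordVal_sub_nat (β : ℝ) (m : ℤ) (n : ℕ)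
    (h : ∀ v, wordVal β m n v → 1 ≤ v → wordVal β m n (v - 1)) (q : ℕ) :
    ∀ v, wordVal β m n v → (q : ℝ) ≤ v → wordVal β m n (v - q) := by
  induction q with
  | zero => intro v hv _; simpa using hv
  | succ q ih =>
    intro v hv hq
    push_cast at hq ⊢
    have h1 := ih v hv (by linarith)
    have h2 := h _ h1 (by linarith)
    have e : v - ((q : ℝ) + 1) = v - q - 1 := by ring
    rw [e]; exact h2

lemma wordVal_sub_int (β : ℝ) (m : ℤ) (n : ℕ)
    (h : ∀ v, wordVal β m n v → 1 ≤ v → wordVal β m n (v - 1)) (q : ℤ) (hq0 : 0 ≤ q)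
    (v : ℝ) (hv : wordVal β m n v) (hq : (q : ℝ) ≤ v) : wordVal β m n (v - q) := by
  lift q to ℕ using hq0
  exact_mod_cast wordVal_sub_nat β m n h q v hv (by exact_mod_cast hq)

lemma wordVal_sub_orb (β : ℝ) (hβ : 1 < β) (d : ℕ) (m p : ℤ) (hm : 1 ≤ m) (hp : 0 ≤ p)
    (hone : backOrb β m p d = 1) (n : ℕ) :
    ∀ j, j ≤ d → ∀ v, wordVal β m n v → backOrb β m p j ≤ v →
      wordVal β m n (v - backOrb β m p j) := by
  have h0 : 0 < β := by linarith
  induction n with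
  | zero =>
    intro j _ v hv hle
    have := backOrb_pos β hβ m p hm hp j
    simp only [wordVal] at hv
    linarith
  | succ n ih =>
    have hsubint := wordVal_sub_int β m n (fun v hv h1 => by
      have := ih d le_rfl v hv (by rw [hone]; exact h1)
      rwa [hone] at this)
    intro j hj v hv hle
    obtain ⟨w, hw0, hwm, t, ht, rfl⟩ := hv
    cases j with
    | zero =>
      simp only [backOrb] at hle ⊢
      rw [div_le_div_iff_of_pos_right h0] at hle
      by_cases hwp : p + 1 ≤ w
      · exact ⟨w - (p + 1), by omega, by omega, t, ht, by push_cast; ring⟩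
      · exact ⟨0, le_rfl, by omega, t - ((p + 1 - w : ℤ) : ℝ),
          hsubint _ (by omega) t ht (by push_cast; linarith), by push_cast; ring⟩
    | succ j =>
      simp only [backOrb] at hle ⊢
      rw [div_le_div_iff_of_pos_right h0] at hle
      have hpos := backOrb_pos β hβ m p hm hp j
      have h1 := hsubint (m - w) (by omega) t ht (by push_cast; linarith)
      have h2 := ih j (by omega) _ h1 (by push_cast; linarith)
      exact ⟨0, le_rfl, by omega, _, h2, by push_cast; ring⟩

lemma wordVal_nonneg (β : ℝ) (hβ : 1 < β) (m : ℤ) (n : ℕ) :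
    ∀ v, wordVal β m n v → 0 ≤ v := by
  induction n with
  | zero => intro v hv; simp only [wordVal] at hv; exact hv.ge
  | succ n ih =>
    rintro v ⟨w, hw0, _, t, ht, rfl⟩
    have := ih t ht
    have hw : (0 : ℝ) ≤ w := by exact_mod_cast hw0
    positivity

lemma wordVal_sum (β : ℝ) (m : ℤ) (n : ℕ) :
    ∀ y : ℕ → ℤ, (∀ j, 0 ≤ y j ∧ y j ≤ m) →
      wordVal β m n (∑ j ∈ Finset.range n, (y j : ℝ) / β ^ (j + 1)) := by
  induction n with
  | zero => intro y _; simp [wordVal]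
  | succ n ih =>
    intro y hy
    refine ⟨y 0, (hy 0).1, (hy 0).2, _, ih (fun j => y (j + 1)) (fun j => hy (j + 1)), ?_⟩
    rw [Finset.sum_range_succ', add_div, Finset.sum_div, add_comm]
    congr 1
    · simp
    · refine Finset.sum_congr rfl fun j _ => ?_
      rw [div_div, ← pow_succ]

lemma wordVal_iter (β : ℝ) (hβ : 1 < β) (m : ℤ)
    (h : ∀ n v, wordVal β m n v → 1 ≤ v → wordVal β m n (v - 1)) (n : ℕ) :
    ∀ v, wordVal β m n v → (renyiT β)^[n] v = 0 := by
  have h0 : β ≠ 0 := by positivity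
  induction n with
  | zero => intro v hv; exact hv
  | succ n ih =>
    rintro v ⟨w, _, _, t, ht, rfl⟩
    rw [Function.iterate_succ_apply]
    apply ih
    have ht0 := wordVal_nonneg β hβ m n t ht
    have e : renyiT β ((w + t) / β) = t - ⌊t⌋ := by
      unfold renyiT
      rw [mul_div_cancel₀ _ h0, Int.floor_intCast_add]
      push_cast; ring
    rw [e]
    exact wordVal_sub_int β m n (h n) _ (Int.floor_nonneg.2 ht0) t ht (Int.floor_le t)

/-- Proposition on confluent bases, after Frougny: let `β > 1` be a
confluent Pisot number, i.e. `β^{d+1} = mβ^d + ⋯ + mβ + p + 1` for integers `d ≥ 1`,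
`m ≥ 1`, `0 ≤ p < m`. If `y = ∑_{j=1}^k y_j/β^j ∈ [0,1)` with digits `y_j ∈ {0,…,m}`,
then the greedy digits `x_j` of `y` vanish for all `j > k`. -/
theorem confluent_finite_rep_greedy_finite
    (β : ℝ) (hβ : 1 < β)
    (d : ℕ) (hd : 1 ≤ d) (m p : ℤ) (hm : 1 ≤ m) (hp : 0 ≤ p) (hpm : p < m)
    (hconfluent : β ^ (d + 1) = m * ∑ j ∈ Finset.range d, β ^ (j + 1) + p + 1)
    (k : ℕ) (hk : 1 ≤ k) (y : ℕ → ℤ) (hy : ∀ j, 0 ≤ y j ∧ y j ≤ m)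
    (Y : ℝ) (hY : Y = ∑ j ∈ Finset.range k, (y j : ℝ) / β ^ (j + 1))
    (hY01 : Y ∈ Set.Ico (0 : ℝ) 1) :
    ∀ j : ℕ, k ≤ j → greedyDigit β Y j = 0 := by
  have h0 : β ≠ 0 := by positivity
  have hone : backOrb β m p d = 1 := by
    have h1 := backOrb_eq β hβ m p d
    rw [← hconfluent] at h1
    exact (mul_eq_left₀ (pow_ne_zero _ h0)).1 h1
  have hsub : ∀ n v, wordVal β m n v → 1 ≤ v → wordVal β m n (v - 1) := by
    intro n v hv h1
    have := wordVal_sub_orb β hβ d m p hm hp hone n d le_rfl v hv (by rw [hone]; exact h1)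
    rwa [hone] at this
  have hzero : (renyiT β)^[k] Y = 0 :=
    wordVal_iter β hβ m hsub k Y (by rw [hY]; exact wordVal_sum β m k y hy)
  intro j hj
  obtain ⟨i, rfl⟩ := Nat.exists_eq_add_of_le' hj
  have hfix : (renyiT β)^[i] 0 = 0 := Function.iterate_fixed (by simp [renyiT]) i
  simp [greedyDigit, Function.iterate_add_apply, hzero, hfix]
end

section
/- Let β > 1 be a confluent Pisot number, i.e., suppose there exist integers d ≥ 1, m ≥ 1, p with 0 ≤ p < m such that β^{d+1} = m β^d + m β^{d−1} + ⋯ + m β + p + 1 (so m = ⌊β⌋), and let A = {0,1,…,m}. Then for every x ∈ [0,1) the greedy (Rényi) representation of x is an optimal (β,A)-representation; in particular every x ∈ [0,1) has an optimal representation. Explicitly: if (x_j) are the greedy digits of x, then for every sequence (b_j) with b_j ∈ A and x = Σ_{j=1}^∞ b_j/β^j, and for every n ≥ 1, one has 0 ≤ x − Σ_{j=1}^n x_j/β^j ≤ x − Σ_{j=1}^n b_j/β^j. -/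
/-- Integer part values: words of length `n` over `{0,…,m}` in base `β`. -/
def InX (β : ℝ) (m : ℤ) : ℕ → ℝ → Prop
  | 0, s => s = 0
  | n + 1, s => ∃ a : ℤ, 0 ≤ a ∧ a ≤ m ∧ ∃ s', InX β m n s' ∧ s = a * β ^ n + s'

/-- The numbers `.m…m(p+1)` with `i` digits `m`. -/
noncomputable def tailE (β : ℝ) (m p : ℤ) : ℕ → ℝ
  | 0 => (p + 1) / β
  | i + 1 => (m + tailE β m p i) / β

lemma tailE_pos (β : ℝ) (hβ : 1 < β) (m p : ℤ) (hm : 1 ≤ m) (hp : 0 ≤ p) (i : ℕ) :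
    0 < tailE β m p i := by
  have hm' : (1 : ℝ) ≤ m := by exact_mod_cast hm
  have hp' : (0 : ℝ) ≤ p := by exact_mod_cast hp
  induction i with
  | zero => simp only [tailE]; positivity
  | succ i ih => simp only [tailE]; positivity

lemma tailE_eq (β : ℝ) (hβ : 1 < β) (m p : ℤ) (i : ℕ) :
    β ^ (i + 1) * tailE β m p i = m * ∑ j ∈ Finset.range i, β ^ (j + 1) + p + 1 := by
  have h0 : β ≠ 0 := by positivity
  induction i with
  | zero => simp only [tailE]; field_simp; simp
  | succ i ih =>
    have : β ^ (i + 1 + 1) * tailE β m p (i + 1)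
        = β ^ (i + 1) * m + β ^ (i + 1) * tailE β m p i := by
      simp only [tailE]; field_simp; ring
    rw [this, ih, Finset.sum_range_succ]; ring

lemma InX_zero (β : ℝ) (m : ℤ) (hm : 1 ≤ m) (n : ℕ) : InX β m n 0 := by
  induction n with
  | zero => simp [InX]
  | succ n ih => exact ⟨0, le_refl _, by lia, 0, ih, by simp⟩

/-- Repeated subtraction of `β ^ k`. -/
lemma InX_sub_mul (β : ℝ) (hβ : 1 < β) (m : ℤ) (k : ℕ)
    (h : ∀ v, InX β m k v → β ^ k ≤ v → InX β m k (v - β ^ k)) (q : ℕ) :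
    ∀ v, InX β m k v → q * β ^ k ≤ v → InX β m k (v - q * β ^ k) := by
  have hk : 0 < β ^ k := by positivity
  induction q with
  | zero => intro v hv _; simpa using hv
  | succ q ih =>
    intro v hv hle
    push_cast at hle ⊢
    have hq : (0 : ℝ) ≤ q * β ^ k := by positivity
    have h1 := ih (v - β ^ k) (h v hv (by nlinarith)) (by nlinarith)
    convert h1 using 1
    ring

lemma InX_sub_mul_int (β : ℝ) (hβ : 1 < β) (m : ℤ) (k : ℕ)
    (h : ∀ v, InX β m k v → β ^ k ≤ v → InX β m k (v - β ^ k)) (q : ℤ) (hq : 0 ≤ q) :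
    ∀ v, InX β m k v → q * β ^ k ≤ v → InX β m k (v - q * β ^ k) := by
  lift q to ℕ using hq
  simpa using InX_sub_mul β hβ m k h q

lemma InX_sub_tail (β : ℝ) (hβ : 1 < β) (m p : ℤ) (hm : 1 ≤ m) (hp : 0 ≤ p) (d : ℕ)
    (hE : tailE β m p d = 1) (k : ℕ) :
    ∀ i ≤ d, ∀ v, InX β m k v → tailE β m p i * β ^ k ≤ v →
      InX β m k (v - tailE β m p i * β ^ k) := by
  have h0 : β ≠ 0 := by positivity
  induction k with
  | zero =>
    intro i _ v hv hle
    have := tailE_pos β hβ m p hm hp i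
    simp only [InX] at hv
    simp at hle
    linarith
  | succ k ih =>
    have hk : 0 < β ^ k := by positivity
    have hone : ∀ v, InX β m k v → β ^ k ≤ v → InX β m k (v - β ^ k) := by
      intro v hv hle
      have := ih d le_rfl v hv (by rw [hE]; linarith)
      rwa [hE, one_mul] at this
    have hsub := InX_sub_mul_int β hβ m k hone
    rintro i hi v ⟨a, ha0, ham, s, hs, rfl⟩ hle
    cases i with
    | zero =>
      have e : tailE β m p 0 * β ^ (k + 1) = (p + 1) * β ^ k := by
        simp only [tailE]; field_simp; ring
      rw [e] at hle ⊢
      by_cases hap : p + 1 ≤ a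
      · exact ⟨a - (p + 1), by lia, by lia, s, hs, by push_cast; ring⟩
      · refine ⟨0, le_rfl, by lia, _, hsub (p + 1 - a) (by lia) s hs ?_, ?_⟩
        · push_cast; linarith
        · push_cast; ring
    | succ i =>
      have e : tailE β m p (i + 1) * β ^ (k + 1) = m * β ^ k + tailE β m p i * β ^ k := by
        simp only [tailE]; field_simp; ring
      have hEk : 0 < tailE β m p i * β ^ k := mul_pos (tailE_pos β hβ m p hm hp i) hk
      rw [e] at hle ⊢
      have h1 := hsub (m - a) (by lia) s hs (by push_cast; linarith)
      have h2 := ih i (by lia) _ h1 (by push_cast; linarith)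
      exact ⟨0, le_rfl, by lia, _, h2, by push_cast; ring⟩

lemma renyiT_mem (β z : ℝ) : 0 ≤ renyiT β z ∧ renyiT β z < 1 := by
  unfold renyiT
  constructor
  · linarith [Int.floor_le (β * z)]
  · linarith [Int.lt_floor_add_one (β * z)]

lemma renyiT_iter_mem (β x : ℝ) (hx : 0 ≤ x ∧ x < 1) (n : ℕ) :
    0 ≤ (renyiT β)^[n] x ∧ (renyiT β)^[n] x < 1 := by
  cases n with
  | zero => simpa using hx
  | succ n => rw [Function.iterate_succ_apply']; exact renyiT_mem _ _

lemma InX_le_greedy (β : ℝ) (hβ : 1 < β) (m : ℤ) (hm : 1 ≤ m)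
    (h : ∀ k v, InX β m k v → β ^ k ≤ v → InX β m k (v - β ^ k)) (n : ℕ) :
    ∀ x s, 0 ≤ x → x < 1 → InX β m n s → s ≤ β ^ n * x →
      s ≤ β ^ n * x - (renyiT β)^[n] x := by
  induction n with
  | zero =>
    intro x s _ _ hs _
    simp only [InX] at hs
    simp [hs]
  | succ n ih =>
    rintro x _ hx0 hx1 ⟨a, ha0, ham, s, hs, rfl⟩ hle
    have hk : 0 < β ^ n := by positivity
    obtain ⟨hT0, hT1⟩ := renyiT_mem β x
    have e : β ^ (n + 1) * x = ⌊β * x⌋ * β ^ n + β ^ n * renyiT β x := by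
      unfold renyiT; ring
    rw [e] at hle ⊢
    rw [Function.iterate_succ_apply]
    set t := ⌊β * x⌋
    by_cases hc : ((t - a : ℤ) : ℝ) * β ^ n ≤ s
    · have hs0 : 0 ≤ s := by
        have : ∀ n s, InX β m n s → 0 ≤ s := by
          intro n
          induction n with
          | zero => intro s hs; exact hs.ge
          | succ n ih =>
            rintro _ ⟨a, ha0, _, s, hs, rfl⟩
            have := ih s hs
            have ha : (0 : ℝ) ≤ a := by exact_mod_cast ha0
            positivity
        exact this n s hs
      have hat : a ≤ t := by
        have : (a : ℝ) < t + 1 := by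
          by_contra hcon
          push Not at hcon
          nlinarith
        have : a < t + 1 := by exact_mod_cast this
        lia
      have h1 := InX_sub_mul_int β hβ m n (h n) (t - a) (by lia) s hs hc
      have h2 := ih (renyiT β x) _ hT0 hT1 h1 (by push_cast; linarith)
      push_cast at h2
      linarith
    · have h2 := ih (renyiT β x) 0 hT0 hT1 (InX_zero β m hm n) (by positivity)
      push_cast at hc
      linarith

lemma InX_sum (β : ℝ) (hβ : 1 < β) (m : ℤ) (n : ℕ) :
    ∀ b : ℕ → ℝ, (∀ i, b i ∈ digitSet m) →
      InX β m n (β ^ n * ∑ j ∈ Finset.range n, b j / β ^ (j + 1)) := by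
  have h0 : β ≠ 0 := by positivity
  induction n with
  | zero => intro b _; simp [InX]
  | succ n ih =>
    intro b hb
    obtain ⟨a, ⟨ha0, ham⟩, hab⟩ := hb 0
    refine ⟨a, ha0, ham, _, ih (fun j => b (j + 1)) (fun i => hb (i + 1)), ?_⟩
    rw [Finset.sum_range_succ', mul_add, add_comm, Finset.mul_sum, Finset.mul_sum]
    congr 1
    · rw [← hab]; field_simp; simp; ring
    · refine Finset.sum_congr rfl fun j _ => ?_
      field_simp; ring

lemma greedy_remainder (β : ℝ) (hβ : 1 < β) (x : ℝ) (n : ℕ) :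
    x - ∑ j ∈ Finset.range n, (greedyDigit β x j : ℝ) / β ^ (j + 1)
      = (renyiT β)^[n] x / β ^ n := by
  have h0 : β ≠ 0 := by positivity
  induction n with
  | zero => simp
  | succ n ih =>
    rw [Finset.sum_range_succ, ← sub_sub, ih, Function.iterate_succ_apply']
    unfold greedyDigit
    generalize (renyiT β)^[n] x = z
    unfold renyiT
    field_simp; ring

/-- Proposition A: let `β > 1` be a confluent Pisot number, i.e.
`β^{d+1} = mβ^d + ⋯ + mβ + p + 1` with integers `d ≥ 1`, `m ≥ 1`, `0 ≤ p < m`, and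
`A = {0,1,…,m}`. Then for every `x ∈ [0,1)` the greedy representation of `x` is an
optimal `(β,A)`-representation: it is a `(β,A)`-representation, and for every
`(β,A)`-representation `(b_j)` of `x` and every `n ≥ 1`,
`0 ≤ x − ∑_{j=1}^n x_j/β^j ≤ x − ∑_{j=1}^n b_j/β^j`. -/
theorem confluent_greedy_is_optimal
    (β : ℝ) (hβ : 1 < β)
    (d : ℕ) (hd : 1 ≤ d) (m p : ℤ) (hm : 1 ≤ m) (hp : 0 ≤ p) (hpm : p < m)
    (hconfluent : β ^ (d + 1) = m * ∑ j ∈ Finset.range d, β ^ (j + 1) + p + 1) :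
    ∀ x ∈ Set.Ico (0 : ℝ) 1,
      IsRep β (digitSet m) (fun j => (greedyDigit β x j : ℝ)) x ∧
      ∀ b : ℕ → ℝ, IsRep β (digitSet m) b x → ∀ n : ℕ, 1 ≤ n →
        0 ≤ x - ∑ j ∈ Finset.range n, (greedyDigit β x j : ℝ) / β ^ (j + 1) ∧
        x - ∑ j ∈ Finset.range n, (greedyDigit β x j : ℝ) / β ^ (j + 1) ≤
          x - ∑ j ∈ Finset.range n, b j / β ^ (j + 1) := by
  intro x hx
  have h0 : β ≠ 0 := by positivity
  have hp' : ((p : ℝ) + 1) ≤ m := by exact_mod_cast hpm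
  have hm' : (1 : ℝ) ≤ m := by exact_mod_cast hm
  have hE : tailE β m p d = 1 := by
    have h := tailE_eq β hβ m p d
    rw [← hconfluent] at h
    have hk : β ^ (d + 1) ≠ 0 := by positivity
    exact mul_left_cancel₀ hk (by rw [h, mul_one])
  have hone : ∀ k v, InX β m k v → β ^ k ≤ v → InX β m k (v - β ^ k) := by
    intro k v hv hle
    have := InX_sub_tail β hβ m p hm hp d hE k d le_rfl v hv (by rw [hE]; linarith)
    rwa [hE, one_mul] at this
  have hβm : β < m + 1 := by
    have h1 : (∑ j ∈ Finset.range (d + 1), β ^ j) * (β - 1) = β ^ (d + 1) - 1 :=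
      geom_sum_mul β (d + 1)
    rw [Finset.sum_range_succ'] at h1
    have hk : 0 < β ^ (d + 1) := by positivity
    have h2 : β ^ (d + 1) ≤ m * (∑ j ∈ Finset.range d, β ^ (j + 1) + β ^ 0) := by
      rw [hconfluent, pow_zero]; linarith
    have h3 := mul_le_mul_of_nonneg_right h2 (by linarith : 0 ≤ β - 1)
    rw [mul_assoc, h1] at h3
    by_contra hc
    push Not at hc
    nlinarith
  have hdig : ∀ j, 0 ≤ greedyDigit β x j ∧ greedyDigit β x j ≤ m := by
    intro j
    obtain ⟨hz0, hz1⟩ := renyiT_iter_mem β x hx j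
    unfold greedyDigit
    constructor
    · exact Int.floor_nonneg.mpr (by positivity)
    · have : ⌊β * (renyiT β)^[j] x⌋ < m + 1 := by
        rw [Int.floor_lt]; push_cast; nlinarith
      lia
  refine ⟨⟨fun j => ⟨_, hdig j, rfl⟩, ?_⟩, ?_⟩
  · rw [hasSum_iff_tendsto_nat_of_nonneg]
    · have e : (fun n : ℕ => ∑ j ∈ Finset.range n, (greedyDigit β x j : ℝ) / β ^ (j + 1))
          = fun n => x - (renyiT β)^[n] x / β ^ n := by
        funext n
        have := greedy_remainder β hβ x n
        linarith
      rw [e]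
      have hlim : Filter.Tendsto (fun n : ℕ => (renyiT β)^[n] x / β ^ n)
          Filter.atTop (nhds 0) := by
        refine squeeze_zero (g := fun n : ℕ => (β⁻¹) ^ n) ?_ ?_
          (tendsto_pow_atTop_nhds_zero_of_lt_one (by positivity) (inv_lt_one_of_one_lt₀ hβ))
        · intro n
          have := (renyiT_iter_mem β x hx n).1
          positivity
        · intro n
          rw [inv_pow, ← one_div]
          have := (renyiT_iter_mem β x hx n).2.le
          gcongr
      simpa using hlim.const_sub x
    · intro j
      have : (0 : ℝ) ≤ greedyDigit β x j := by exact_mod_cast (hdig j).1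
      positivity
  · intro b hb n _
    have hk : 0 < β ^ n := by positivity
    have hrem := greedy_remainder β hβ x n
    have hz := (renyiT_iter_mem β x hx n).1
    rw [hrem]
    refine ⟨by positivity, ?_⟩
    have hle : ∑ j ∈ Finset.range n, b j / β ^ (j + 1) ≤ x := by
      refine sum_le_hasSum _ (fun j _ => ?_) hb.2
      obtain ⟨a, ⟨ha0, _⟩, hab⟩ := hb.1 j
      have : (0 : ℝ) ≤ b j := by rw [← hab]; exact Int.cast_nonneg ha0
      positivity
    have := InX_le_greedy β hβ m hm hone n x _ hx.1 hx.2 (InX_sum β hβ m n b hb.1)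
      (by gcongr)
    rw [div_le_iff₀ hk]
    linarith
end

section
/- Let β > 1 with β ∉ ℤ, let A = {0,1,…,⌊β⌋}, and let (t_j)_{j≥1} be the quasi-greedy (infinite Rényi) expansion of 1 in base β, i.e., t_j ∈ A for all j, Σ_{j=1}^∞ t_j/β^j = 1, for every k ≥ 1 the shifted sequence (t_{k+j})_{j≥1} is lexicographically ≤ (t_j)_{j≥1}, and t_j ≠ 0 for infinitely many j. Assume (t_j) is NOT of the form (m, m, …, m, p)^ω (a purely periodic sequence consisting of a block of m's followed by a single digit p with 0 ≤ p < m). Then there exists a nonempty open interval I ⊂ (0,1) such that no x ∈ I has an optimal (β,A)-representation. -/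
lemma aux_rep01 (β : ℝ) (hβ : 1 < β) (y : ℝ) (hy0 : 0 ≤ y) (hy1 : y < 1) :
    ∃ b, IsRep β (digitSet ⌊β⌋) b y := by
  have hβ0 : 0 < β := by linarith
  let Y : ℕ → ℝ := fun n => Nat.rec y (fun _ z => Int.fract (β * z)) n
  have hY0 : Y 0 = y := rfl
  have hYs : ∀ n, Y (n+1) = Int.fract (β * Y n) := fun n => rfl
  have hYr : ∀ n, 0 ≤ Y n ∧ Y n < 1 := by
    intro n
    cases n with
    | zero => exact ⟨hy0, hy1⟩
    | succ n => rw [hYs]; exact ⟨Int.fract_nonneg _, Int.fract_lt_one _⟩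
  have hd : ∀ n, 0 ≤ ⌊β * Y n⌋ ∧ ⌊β * Y n⌋ ≤ ⌊β⌋ := by
    intro n
    constructor
    · exact Int.floor_nonneg.mpr (mul_nonneg hβ0.le (hYr n).1)
    · apply Int.floor_le_floor
      nlinarith [(hYr n).2]
  refine ⟨fun n => (⌊β * Y n⌋ : ℝ), fun i => ⟨_, hd i, rfl⟩, ?_⟩
  have hps : ∀ n, ∑ i ∈ Finset.range n, (⌊β * Y i⌋ : ℝ) / β ^ (i+1) = y - Y n / β ^ n := by
    intro n
    induction n with
    | zero => simp [hY0]
    | succ n ih =>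
      rw [Finset.sum_range_succ, ih, hYs, Int.fract]
      field_simp
      ring
  have hnn : ∀ i, 0 ≤ (⌊β * Y i⌋ : ℝ) / β ^ (i+1) := fun i =>
    div_nonneg (by exact_mod_cast (hd i).1) (by positivity)
  rw [hasSum_iff_tendsto_nat_of_nonneg hnn]
  simp_rw [hps]
  have h0 : Filter.Tendsto (fun n => Y n / β ^ n) Filter.atTop (nhds 0) := by
    have hg : Filter.Tendsto (fun n : ℕ => (1/β) ^ n) Filter.atTop (nhds 0) :=
      tendsto_pow_atTop_nhds_zero_of_lt_one (by positivity) (by rw [div_lt_one hβ0]; exact hβ)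
    refine squeeze_zero (fun n => div_nonneg (hYr n).1 (by positivity)) (fun n => ?_) hg
    rw [one_div_pow]
    exact div_le_div_of_nonneg_right (hYr n).2.le (by positivity)
  simpa using h0.const_sub y

lemma aux_prepend (β : ℝ) (hβ : 1 < β) (B : Set ℝ) (p : ℕ → ℝ) (hp : ∀ i, p i ∈ B) (n : ℕ)
    (b : ℕ → ℝ) (y : ℝ) (hb : IsRep β B b y) :
    ∃ c, IsRep β B c ((∑ i ∈ Finset.range n, p i / β ^ (i+1)) + y / β ^ n) ∧
      ∑ i ∈ Finset.range n, c i / β ^ (i+1) = ∑ i ∈ Finset.range n, p i / β ^ (i+1) := by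
  have hβ0 : 0 < β := by linarith
  have hs : ∑ i ∈ Finset.range n, (if i < n then p i else b (i-n)) / β ^ (i+1)
      = ∑ i ∈ Finset.range n, p i / β ^ (i+1) := by
    apply Finset.sum_congr rfl
    intro i hi
    rw [if_pos (Finset.mem_range.mp hi)]
  refine ⟨fun i => if i < n then p i else b (i-n), ⟨fun i => ?_, ?_⟩, hs⟩
  · show (if i < n then p i else b (i-n)) ∈ B
    split_ifs
    · exact hp i
    · exact hb.1 _
  · rw [← hs, add_comm, ← hasSum_nat_add_iff (f := fun i => (if i < n then p i else b (i-n)) / β ^ (i+1))]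
    have := hb.2.div_const (β ^ n)
    have hfe : (fun i => (if i + n < n then p (i + n) else b (i + n - n)) / β ^ (i + n + 1))
        = fun i => b i / β ^ (i+1) / β ^ n := by
      funext i
      rw [if_neg (by omega), Nat.add_sub_cancel, div_div]
      congr 1
      ring
    rw [hfe]
    exact this

lemma aux_digit {M : ℤ} {z : ℝ} (h : z ∈ digitSet M) : 0 ≤ z ∧ (z = 0 ∨ 1 ≤ z) ∧ (z < 2 → z ≤ 1) := by
  obtain ⟨k, hk, rfl⟩ := h
  have hk0 : 0 ≤ k := hk.1
  simp only
  refine ⟨by exact_mod_cast hk0, ?_, ?_⟩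
  · rcases hk0.eq_or_lt with h | h
    · left; simp [← h]
    · right; exact_mod_cast h
  · intro h
    have h' : (k:ℝ) < ((2:ℤ):ℝ) := by simpa using h
    have : k < 2 := by exact_mod_cast h'
    have : k ≤ 1 := by omega
    exact_mod_cast this

/-- The core: a good index `k` gives the interval. -/
lemma aux_interval (β : ℝ) (hβ : 1 < β) (t : ℕ → ℤ) (ht : ∀ j, 0 ≤ t j ∧ t j ≤ ⌊β⌋)
    (k : ℕ) (hlt : t k < ⌊β⌋) (R : ℝ) (hR0 : 0 < R) (hR1 : R < 1)
    (hR : ∑ i ∈ Finset.range (k+1), (t i : ℝ) / β ^ (i+1) = 1 - R / β ^ (k+1))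
    (hk : 1 + 1 / β ^ (k+1) ≤ β) :
    ∃ a b : ℝ, a < b ∧ Set.Ioo a b ⊆ Set.Ioo (0 : ℝ) 1 ∧
      ∀ x ∈ Set.Ioo a b, ¬ ∃ c : ℕ → ℝ, IsOptimalRep β (digitSet ⌊β⌋) c x := by
  have hβ0 : 0 < β := by linarith
  have hM1 : (1:ℤ) ≤ ⌊β⌋ := Int.le_floor.mpr (by simpa using hβ.le)
  set e : ℝ := 1 / β ^ (k+3) with he
  have he0 : 0 < e := by positivity
  have hb1 : 1 / β ^ 2 + e ≤ 1 / β := by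
    have : 1 / β ^ 2 + e = (1 + 1 / β ^ (k+1)) / β ^ 2 := by
      rw [he, show k + 3 = (k + 1) + 2 by ring, pow_add]; field_simp
    rw [this, div_le_div_iff₀ (by positivity) hβ0]
    nlinarith
  have hβi : 1 / β < 1 := by rw [div_lt_one hβ0]; exact hβ
  have h2pos : 0 < 1 / β ^ 2 := by positivity
  refine ⟨1 / β ^ 2 + (1 - R) * e, 1 / β ^ 2 + e, by nlinarith, ?_, ?_⟩
  · intro x hx
    have := mul_pos (sub_pos.mpr hR1) he0
    exact ⟨by linarith [hx.1], by linarith [hx.2]⟩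
  rintro x ⟨hxa, hxb⟩ ⟨c, ⟨hc, hcs⟩, hopt⟩
  have hRe := mul_pos (sub_pos.mpr hR1) he0
  have hnn : ∀ i, 0 ≤ c i / β ^ (i+1) := fun i => div_nonneg (aux_digit (hc i)).1 (by positivity)
  have hle : ∀ s : Finset ℕ, ∑ i ∈ s, c i / β ^ (i+1) ≤ x := fun s =>
    sum_le_hasSum s (fun i _ => hnn i) hcs
  -- c 0 = 0
  have hc0 : c 0 = 0 := by
    rcases (aux_digit (hc 0)).2.1 with h | h
    · exact h
    · have h1 := hle {0}
      rw [Finset.sum_singleton, zero_add, pow_one] at h1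
      have : 1 / β ≤ c 0 / β := div_le_div_of_nonneg_right h hβ0.le
      linarith
  -- comparison with 0 1 ...
  have hc1 : 1 ≤ c 1 := by
    obtain ⟨b, hb⟩ := aux_rep01 β hβ ((x - 1 / β ^ 2) * β ^ 2) (by
      apply mul_nonneg _ (by positivity)
      linarith) (by
      have h1 : x - 1 / β ^ 2 < e := by linarith
      have h2 : e ≤ 1 / β ^ 2 := by
        rw [he]
        exact one_div_le_one_div_of_le (by positivity) (pow_le_pow_right₀ hβ.le (by omega))
      have h3 : x - 1 / β ^ 2 < 1 / β ^ 2 := by linarith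
      rwa [lt_div_iff₀ (by positivity)] at h3)
    obtain ⟨c', hc', hcs'⟩ := aux_prepend β hβ (digitSet ⌊β⌋) (fun i => if i = 1 then 1 else 0)
      (fun i => by
        split_ifs
        · exact ⟨1, ⟨by norm_num, hM1⟩, by simp⟩
        · exact ⟨0, ⟨le_refl _, by omega⟩, by simp⟩) 2 b _ hb
    have hsum2 : ∑ i ∈ Finset.range 2, (if i = 1 then (1:ℝ) else 0) / β ^ (i+1) = 1 / β ^ 2 := by
      simp [Finset.sum_range_succ]
    rw [hsum2] at hc' hcs'
    rw [mul_div_cancel_right₀ _ (by positivity), add_sub_cancel] at hc'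
    have h := hopt c' hc' 2 (by norm_num)
    rw [hcs', abs_of_nonneg (by linarith [hle (Finset.range 2)]), abs_of_nonneg (by linarith)] at h
    simp only [Finset.sum_range_succ, Finset.sum_range_zero, hc0] at h
    have h' : 1 / β ^ 2 ≤ c 1 / β ^ 2 := by
      norm_num at h ⊢
      linarith
    exact (div_le_div_iff_of_pos_right (by positivity)).mp h'
  have hc1' : c 1 ≤ 1 := by
    apply (aux_digit (hc 1)).2.2
    have h1 := hle {1}
    rw [Finset.sum_singleton] at h1
    have h2 : e ≤ 1 / β ^ 2 := by
      rw [he]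
      exact one_div_le_one_div_of_le (by positivity) (pow_le_pow_right₀ hβ.le (by omega))
    have h3 : c 1 / β ^ 2 < 2 / β ^ 2 := by
      have : 2 / β ^ 2 = 1 / β ^ 2 + 1 / β ^ 2 := by ring
      norm_num at h1
      linarith
    exact (div_lt_div_iff_of_pos_right (by positivity)).mp h3
  have hc1e : c 1 = 1 := le_antisymm hc1' hc1
  have hz : ∀ i, i < k + 1 → c (i + 2) = 0 := by
    intro i hi
    rcases (aux_digit (hc (i+2))).2.1 with h | h
    · exact h
    · have h1 := hle {1, i+2}
      rw [Finset.sum_pair (by omega), hc1e] at h1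
      have h2 : e ≤ c (i+2) / β ^ (i+2+1) := by
        rw [he]
        calc 1 / β ^ (k+3) ≤ 1 / β ^ (i+2+1) :=
              one_div_le_one_div_of_le (by positivity) (pow_le_pow_right₀ hβ.le (by omega))
          _ ≤ _ := div_le_div_of_nonneg_right h (by positivity)
      norm_num at h1 hxb
      linarith
  have hSc : ∑ i ∈ Finset.range (k+3), c i / β ^ (i+1) = 1 / β ^ 2 := by
    rw [Finset.sum_range_succ', Finset.sum_range_succ', hc0, hc1e,
      Finset.sum_eq_zero (fun i hi => by
        rw [show i + 1 + 1 = i + 2 from rfl, hz i (Finset.mem_range.mp hi), zero_div])]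
    norm_num
  -- comparison with 0 0 t ...
  obtain ⟨b, hb⟩ := aux_rep01 β hβ ((x - (1 / β ^ 2 + (1 - R) * e)) * β ^ (k+3)) (by
      apply mul_nonneg _ (by positivity)
      linarith) (by
      have h3 : x - (1 / β ^ 2 + (1 - R) * e) < 1 / β ^ (k+3) := by rw [← he]; nlinarith
      rwa [lt_div_iff₀ (by positivity)] at h3)
  obtain ⟨c', hc', hcs'⟩ := aux_prepend β hβ (digitSet ⌊β⌋)
    (fun i => if i < 2 then 0 else if i = k + 2 then ((t k + 1 : ℤ) : ℝ) else ((t (i-2) : ℤ) : ℝ))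
      (fun i => by
        split_ifs
        · exact ⟨0, ⟨le_refl _, by omega⟩, by simp⟩
        · exact ⟨t k + 1, ⟨by have := (ht k).1; omega, by omega⟩, rfl⟩
        · exact ⟨t (i-2), ht _, rfl⟩) (k+3) b _ hb
  have hsum3 : ∑ i ∈ Finset.range (k+3),
      (if i < 2 then 0 else if i = k + 2 then ((t k + 1 : ℤ) : ℝ) else ((t (i-2) : ℤ) : ℝ)) / β ^ (i+1)
      = 1 / β ^ 2 + (1 - R) * e := by
    have h1 : ∑ i ∈ Finset.range (k+3),
      (if i < 2 then 0 else if i = k + 2 then ((t k + 1 : ℤ) : ℝ) else ((t (i-2) : ℤ) : ℝ)) / β ^ (i+1)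
      = (∑ i ∈ Finset.range (k+1), (t i : ℝ) / β ^ (i+1)) / β ^ 2 + e := by
      rw [Finset.sum_range_succ', Finset.sum_range_succ', Finset.sum_range_succ,
        Finset.sum_range_succ, add_div, Finset.sum_div]
      have : ∀ i ∈ Finset.range k, (if i + 1 + 1 < 2 then 0 else if i + 1 + 1 = k + 2 then
          ((t k + 1 : ℤ) : ℝ) else ((t (i + 1 + 1 -2) : ℤ) : ℝ)) / β ^ (i+1+1+1)
          = (t i : ℝ) / β ^ (i+1) / β ^ 2 := by
        intro i hi
        have := Finset.mem_range.mp hi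
        rw [if_neg (by omega), if_neg (by omega), div_div, ← pow_add]
        rfl
      rw [Finset.sum_congr rfl this]
      have h0 : (if 0 < 2 then (0:ℝ) else if 0 = k + 2 then
          ((t k + 1 : ℤ) : ℝ) else ((t (0 - 2) : ℤ) : ℝ)) / β ^ (0+1) = 0 := by simp
      have h1 : (if 0 + 1 < 2 then (0:ℝ) else if 0 + 1 = k + 2 then
          ((t k + 1 : ℤ) : ℝ) else ((t (0 + 1 - 2) : ℤ) : ℝ)) / β ^ (0+1+1) = 0 := by simp
      have h2 : (if k + 1 + 1 < 2 then (0:ℝ) else if k + 1 + 1 = k + 2 then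
          ((t k + 1 : ℤ) : ℝ) else ((t (k + 1 + 1 - 2) : ℤ) : ℝ)) / β ^ (k+1+1+1)
          = (t k : ℝ) / β ^ (k+1) / β ^ 2 + e := by
        rw [if_neg (by omega), if_pos rfl, he, div_div, ← pow_add, ← add_div]
        push_cast
        rfl
      rw [h0, h1, h2]
      ring
    rw [h1, hR, he]
    field_simp
    ring
  rw [hsum3] at hc' hcs'
  rw [mul_div_cancel_right₀ _ (by positivity), add_sub_cancel] at hc'
  have h := hopt c' hc' (k+3) (by omega)
  rw [hcs', hSc, abs_of_nonneg (by linarith), abs_of_nonneg (by linarith)] at h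
  linarith

/-- Parry-type facts on the tails. -/
lemma aux_tails (β : ℝ) (hβ : 1 < β) 
    (t : ℕ → ℤ) (ht : ∀ j, 0 ≤ t j ∧ t j ≤ ⌊β⌋)
    (hsum : HasSum (fun j : ℕ => (t j : ℝ) / β ^ (j + 1)) 1)
    (hshift : ∀ k : ℕ, 1 ≤ k →
      (∀ j, t (k + j) = t j) ∨ ∃ j, (∀ i < j, t (k + i) = t i) ∧ t (k + j) < t j)
    (hnev0 : ∀ N : ℕ, ∃ j, N ≤ j ∧ t j ≠ 0) :
    ∃ r : ℕ → ℝ, (∀ k, HasSum (fun j : ℕ => (t (k + j) : ℝ) / β ^ (j + 1)) (r k)) ∧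
      (∀ k, ∑ i ∈ Finset.range k, (t i : ℝ) / β ^ (i+1) = 1 - r k / β ^ k) ∧
      (∀ k, 0 < r k) ∧ (∀ k, r k ≤ 1) ∧
      (∀ k, 1 ≤ k → r k = 1 → ∀ j, t (k + j) = t j) := by
  have hβ0 : 0 < β := by linarith
  let r : ℕ → ℝ := fun k => (1 - ∑ i ∈ Finset.range k, (t i : ℝ) / β ^ (i+1)) * β ^ k
  have hr : ∀ k, r k = (1 - ∑ i ∈ Finset.range k, (t i : ℝ) / β ^ (i+1)) * β ^ k := fun k => rfl
  have hrs : ∀ k, HasSum (fun j : ℕ => (t (k + j) : ℝ) / β ^ (j + 1)) (r k) := by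
    intro k
    have h := ((hasSum_nat_add_iff' k).mpr hsum).mul_right (β ^ k)
    have hfe : (fun j : ℕ => (t (k + j) : ℝ) / β ^ (j + 1))
        = fun j => (t (j + k) : ℝ) / β ^ (j + k + 1) * β ^ k := by
      funext j
      rw [add_comm k j]
      field_simp
      ring
    rw [hfe]
    exact h
  have hr0 : r 0 = 1 := by simp [hr]
  have hsm : ∀ k, ∑ i ∈ Finset.range k, (t i : ℝ) / β ^ (i+1) = 1 - r k / β ^ k := by
    intro k
    rw [hr, mul_div_cancel_right₀ _ (by positivity)]
    ring
  have hpos : ∀ k, 0 < r k := by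
    intro k
    obtain ⟨j, hj, hj0⟩ := hnev0 k
    obtain ⟨i, rfl⟩ := Nat.exists_eq_add_of_le hj
    have h1 : (t (k+i) : ℝ) / β ^ (i+1) ≤ r k :=
      le_hasSum (hrs k) i (fun j _ => div_nonneg (by exact_mod_cast (ht _).1) (by positivity))
    have h2 : 0 < t (k+i) := lt_of_le_of_ne (ht _).1 (Ne.symm hj0)
    have h3 : 0 < (t (k+i) : ℝ) := by exact_mod_cast h2
    have : 0 < (t (k+i) : ℝ) / β ^ (i+1) := by positivity
    linarith
  -- bound
  obtain ⟨C, hC0, hC⟩ : ∃ C : ℝ, 0 ≤ C ∧ ∀ k, r k - 1 ≤ C := by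
    have hg := (hasSum_geometric_of_lt_one (r := 1/β) (by positivity)
      (by rw [div_lt_one hβ0]; exact hβ)).mul_left ((⌊β⌋:ℝ) / β)
    refine ⟨(⌊β⌋:ℝ) / β * (1 - 1/β)⁻¹, ?_, fun k => ?_⟩
    · refine hg.nonneg (fun i => ?_)
      have : (0:ℝ) ≤ ⌊β⌋ := by exact_mod_cast Int.floor_nonneg.mpr hβ0.le
      positivity
    · have := hasSum_le (fun j => ?_) (hrs k) hg
      · linarith
      · have h1 : (t (k+j) : ℝ) ≤ ⌊β⌋ := by exact_mod_cast (ht _).2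
        calc (t (k+j) : ℝ) / β ^ (j+1) ≤ (⌊β⌋:ℝ) / β ^ (j+1) :=
              div_le_div_of_nonneg_right h1 (by positivity)
          _ = _ := by rw [one_div_pow, pow_succ]; field_simp
  have hdecomp : ∀ k n, r k = (∑ i ∈ Finset.range n, (t (k+i) : ℝ) / β ^ (i+1)) + r (k+n) / β ^ n := by
    intro k n
    induction n with
    | zero => simp
    | succ n ih =>
      rw [ih, Finset.sum_range_succ, hr (k+n), hr (k+(n+1)), ← add_assoc k n 1,
        Finset.sum_range_succ]
      field_simp
      ring
  have hkey : ∀ k, 1 ≤ k → (∀ j, t (k+j) = t j) ∨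
      ∃ j, r k - 1 < (r (k+(j+1)) - 1) / β ^ (j+1) := by
    intro k hk
    rcases hshift k hk with h | ⟨j, hj, hlt⟩
    · exact Or.inl h
    · refine Or.inr ⟨j, ?_⟩
      have h1 := hdecomp k (j+1)
      have h2 := hdecomp 0 (j+1)
      rw [Finset.sum_range_succ] at h1 h2
      rw [hr0] at h2
      simp only [zero_add] at h2
      have h3 : ∑ i ∈ Finset.range j, (t (k+i) : ℝ) / β ^ (i+1)
          = ∑ i ∈ Finset.range j, (t i : ℝ) / β ^ (i+1) :=
        Finset.sum_congr rfl (fun i hi => by rw [hj i (Finset.mem_range.mp hi)])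
      rw [h3] at h1
      have h4 : (t (k+j) : ℝ) ≤ t j - 1 := by
        have : t (k+j) ≤ t j - 1 := by omega
        exact_mod_cast this
      have h5 : (t (k+j) : ℝ) / β ^ (j+1) ≤ t j / β ^ (j+1) - 1 / β ^ (j+1) := by
        rw [← sub_div]
        exact div_le_div_of_nonneg_right h4 (by positivity)
      have h6 : 0 < r (j+1) / β ^ (j+1) := div_pos (hpos _) (by positivity)
      rw [sub_div]
      linarith
  have hper1 : ∀ k, (∀ j, t (k+j) = t j) → r k = 1 := by
    intro k h
    have := hrs k
    simp_rw [h] at this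
    exact this.unique hsum
  have hle1 : ∀ k, r k ≤ 1 := by
    have hn : ∀ n k, r k - 1 ≤ C * (1/β) ^ n := by
      intro n
      induction n with
      | zero => intro k; simpa using hC k
      | succ n ih =>
        intro k
        have hC' : 0 ≤ C * (1/β) ^ (n+1) := by positivity
        rcases Nat.eq_zero_or_pos k with rfl | hk
        · rw [hr0]; linarith
        rcases hkey k hk with h | ⟨j, hj⟩
        · rw [hper1 k h]; linarith
        · refine hj.le.trans ?_
          calc (r (k+(j+1)) - 1) / β ^ (j+1) ≤ (C * (1/β) ^ n) / β ^ (j+1) :=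
                div_le_div_of_nonneg_right (ih _) (by positivity)
            _ ≤ (C * (1/β) ^ n) / β := by
                apply div_le_div_of_nonneg_left (by positivity) hβ0
                exact le_self_pow₀ hβ.le (by omega)
            _ = _ := by rw [pow_succ]; ring
    intro k
    have hg : Filter.Tendsto (fun n : ℕ => C * (1/β) ^ n) Filter.atTop (nhds (C * 0)) :=
      (tendsto_pow_atTop_nhds_zero_of_lt_one (by positivity)
        (by rw [div_lt_one hβ0]; exact hβ)).const_mul C
    have := ge_of_tendsto' hg (fun n => hn n k)
    linarith
  refine ⟨r, hrs, hsm, hpos, hle1, ?_⟩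
  intro k hk hk1
  rcases hkey k hk with h | ⟨j, hj⟩
  · exact h
  · exfalso
    have : (r (k+(j+1)) - 1) / β ^ (j+1) ≤ 0 :=
      div_nonpos_of_nonpos_of_nonneg (by linarith [hle1 (k+(j+1))]) (by positivity)
    linarith

/-- Proposition on non-confluent bases: let `β > 1`, `β ∉ ℤ`,
`A = {0,…,⌊β⌋}`, and let `(t_j)` be the quasi-greedy expansion of `1` in base `β`
(digits in `A`, `∑ t_j/β^j = 1`, every shift lexicographically `≤ (t_j)`, not eventually
zero). If `(t_j)` is not of the form `(m,…,m,p)^ω` with `0 ≤ p < m`, then there is a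
nonempty open interval `I ⊆ (0,1)` on which no point has an optimal
`(β,A)`-representation. (`t` is 0-indexed: `t j` is the digit `t_{j+1}`.) -/
theorem no_optimal_interval_nonconfluent
    (β : ℝ) (hβ : 1 < β) (hβZ : ∀ n : ℤ, β ≠ n)
    (t : ℕ → ℤ) (ht : ∀ j, 0 ≤ t j ∧ t j ≤ ⌊β⌋)
    (hsum : HasSum (fun j : ℕ => (t j : ℝ) / β ^ (j + 1)) 1)
    (hshift : ∀ k : ℕ, 1 ≤ k →
      (∀ j, t (k + j) = t j) ∨ ∃ j, (∀ i < j, t (k + i) = t i) ∧ t (k + j) < t j)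
    (hnev0 : ∀ N : ℕ, ∃ j, N ≤ j ∧ t j ≠ 0)
    (hnonconfluent : ¬ ∃ d : ℕ, 1 ≤ d ∧ ∃ m p : ℤ, 0 ≤ p ∧ p < m ∧
      ∀ j : ℕ, t j = if (j + 1) % (d + 1) = 0 then p else m) :
    ∃ a b : ℝ, a < b ∧ Set.Ioo a b ⊆ Set.Ioo (0 : ℝ) 1 ∧
      ∀ x ∈ Set.Ioo a b, ¬ ∃ c : ℕ → ℝ, IsOptimalRep β (digitSet ⌊β⌋) c x := by
  have hβ0 : 0 < β := by linarith
  obtain ⟨r, hrs, hsm, hpos, hle1, hper⟩ := aux_tails β hβ t ht hsum hshift hnev0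
  have hgeo : ∀ z : ℝ, HasSum (fun j : ℕ => z / β ^ (j+1)) (z / (β - 1)) := by
    intro z
    have hg := (hasSum_geometric_of_lt_one (r := 1/β) (by positivity)
      (by rw [div_lt_one hβ0]; exact hβ)).mul_left (z / β)
    have hb1 : β - 1 ≠ 0 := by linarith
    have hfe : (fun j : ℕ => z / β ^ (j+1)) = fun j => z / β * (1/β) ^ j := by
      funext j
      rw [one_div_pow, pow_succ]; field_simp
    have hv : z / (β - 1) = z / β * (1 - 1/β)⁻¹ := by
      rw [show 1 - 1/β = (β - 1)/β by field_simp]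
      field_simp
    rw [hfe, hv]
    exact hg
  have hMlt : β < ⌊β⌋ + 1 := Int.lt_floor_add_one β
  obtain ⟨K, hK⟩ : ∃ K : ℕ, ∀ k, K ≤ k → 1 + 1 / β ^ (k+1) ≤ β := by
    have hg : Filter.Tendsto (fun n : ℕ => (1/β) ^ n) Filter.atTop (nhds 0) :=
      tendsto_pow_atTop_nhds_zero_of_lt_one (by positivity) (by rw [div_lt_one hβ0]; exact hβ)
    obtain ⟨K, hK⟩ := Filter.eventually_atTop.mp (hg.eventually_lt_const (sub_pos.mpr hβ))
    refine ⟨K, fun k hk => ?_⟩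
    have := hK (k+1) (by omega)
    rw [one_div_pow] at this
    linarith
  by_cases hex : ∃ k, K ≤ k ∧ t k < ⌊β⌋ ∧ r (k+1) < 1
  · obtain ⟨k, hk, hlt, hr1⟩ := hex
    exact aux_interval β hβ t ht k hlt (r (k+1)) (hpos _) hr1 (hsm _) (hK k hk)
  exfalso
  push Not at hex
  have hex' : ∀ k, K ≤ k → t k < ⌊β⌋ → ∀ j, t (k + 1 + j) = t j := fun k hk hlt =>
    hper (k+1) (by omega) (le_antisymm (hle1 _) (hex k hk hlt))
  -- some late digit is below the maximum
  obtain ⟨k, hk, hlt⟩ : ∃ k, K ≤ k ∧ t k < ⌊β⌋ := by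
    by_contra hno
    push Not at hno
    have h1 := hrs K
    have h2 : ∀ j, t (K + j) = ⌊β⌋ := fun j => le_antisymm (ht _).2 (hno _ (by omega))
    simp_rw [h2] at h1
    have h3 := h1.unique (hgeo ⌊β⌋)
    have h4 := hle1 K
    rw [h3, div_le_one (by linarith)] at h4
    linarith
  have hp := hex' k hk hlt
  have hmul : ∀ s j, t (s * (k+1) + j) = t j := by
    intro s
    induction s with
    | zero => intro j; simp
    | succ s ih =>
      intro j
      rw [show (s+1) * (k+1) + j = k + 1 + (s * (k+1) + j) by ring, hp, ih]
  have hall : ∀ q, t q < ⌊β⌋ → ∀ j, t (q + 1 + j) = t j := by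
    intro q hq j
    have h1 := hex' (K * (k+1) + q) (by nlinarith [Nat.zero_le (K * k)]) (by rw [hmul]; exact hq) j
    rw [show K * (k+1) + q + 1 + j = K * (k+1) + (q + 1 + j) by ring, hmul] at h1
    exact h1
  have hexq : ∃ q, t q < ⌊β⌋ := ⟨k, hlt⟩
  classical
  let q := Nat.find hexq
  have hq : t q < ⌊β⌋ := Nat.find_spec hexq
  have hqmin : ∀ i, i < q → t i = ⌊β⌋ := fun i hi =>
    le_antisymm (ht i).2 (not_lt.mp (Nat.find_min hexq hi))
  have hqper := hall q hq
  have hq1 : 1 ≤ q := by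
    by_contra h
    have h0 : q = 0 := by omega
    rw [h0] at hqper
    have hc : ∀ j, t j = t 0 := by
      intro j
      induction j with
      | zero => rfl
      | succ j ih => rw [← ih, ← hqper j]; congr 1; omega
    have h1 := hsum
    simp_rw [hc] at h1
    have h3 := h1.unique (hgeo (t 0))
    rw [eq_div_iff (by linarith)] at h3
    apply hβZ (t 0 + 1)
    push_cast
    linarith
  apply hnonconfluent
  refine ⟨q, hq1, ⌊β⌋, t q, (ht q).1, hq, ?_⟩
  intro j
  induction j using Nat.strong_induction_on with
  | _ j ih =>
    by_cases hj : j < q + 1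
    · by_cases hjq : j = q
      · rw [hjq, Nat.mod_self, if_pos rfl]
      · rw [Nat.mod_eq_of_lt (by omega), if_neg (by omega)]
        exact hqmin j (by omega)
    · obtain ⟨i, rfl⟩ := Nat.exists_eq_add_of_le (not_lt.mp hj)
      rw [hqper, ih i (by omega), show q + 1 + i + 1 = i + 1 + (q + 1) by ring, Nat.add_mod_right]
end
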